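/- For every integer k ≥ 2 and every real p > q_k, the integral ∫_{ℝ^N} |E_k1(x)|^p dx is finite. -/

import Mathlib

open MeasureTheory Real Set
open scoped ENNReal

noncomputable section

/-- Index set for multi-indices `β = (β₁, β₂) ∈ ℕ²` with `1 ≤ β₁ + β₂ ≤ k`;
its cardinality is `N = (k+1)(k+2)/2 − 1`. -/
def Idx (k : ℕ) : Type :=
  {β : Fin (k + 1) × Fin (k + 1) // 1 ≤ (β.1 : ℕ) + (β.2 : ℕ) ∧ (β.1 : ℕ) + (β.2 : ℕ) ≤ k}

instance (k : ℕ) : Fintype (Idx k) := by unfold Idx; infer_instance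

/-- The phase polynomial `P(ξ; x) = ∑_{1 ≤ |β| ≤ k} x_β ξ₁^{β₁} ξ₂^{β₂}`. -/
def Pphase (k : ℕ) (x : Idx k → ℝ) (ξ : Fin 2 → ℝ) : ℝ :=
  ∑ β : Idx k, x β * ξ 0 ^ (β.1.1 : ℕ) * ξ 1 ^ (β.1.2 : ℕ)

/-- `E_k1(x) = ∫_{[0,1]²} e(P(ξ; x)) dξ` with `e(t) = exp(2πit)`. -/
def Eone (k : ℕ) (x : Idx k → ℝ) : ℂ :=
  ∫ ξ in Icc (0 : Fin 2 → ℝ) 1, Complex.exp (2 * Real.pi * Complex.I * (Pphase k x ξ))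

/-!
Write `E(x) = ∫₀¹ S(x, s) ds` with the slices `S(x, s) = ∫₀¹ e(P(s, t; x)) dt`, and keep of
`S(x, ·)` only its values of modulus in `(a / 2, a]`, with `a = 2⁻ⁿ`. By van der Corput's estimate,
such a value forces the Taylor coefficients of `P(s, ·; x)` of each order `j ≥ 1` to be
`O(a ^ (-j))` throughout an interval of length comparable to `a`. Imposing this at `k + 1`
separated points `s` confines the coefficients `x_β` with `β₂ > 0` to a set whose volume is
controlled by divided differences in `s`. The remaining coefficients `x_{(m, 0)}` enter `S(x, s)`
only through the unimodular factor `e(∑ₘ x_{(m, 0)} s ^ m)`, so a product of integrals over `k`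
separated intervals is a Fourier transform along the nondegenerate map `(sᵢ) ↦ (∑ᵢ sᵢ ^ m)ₘ`, and
Plancherel's theorem integrates them out.

This bounds products over `k + 1` separated intervals. In general, either such a product controls
the integral over `[0, 1]`, or the integral over a single short interval does, and an affine change
of `s` maps the latter back to `[0, 1]` with a gain, because `p > k (k + 1) (k + 2) / 6 + 1`. The
resulting bounds `O(a ^ (p - q_k - ε))` are summable over the dyadic values of `a` when `p > q_k`.
-/

open scoped FourierTransform NNReal

theorem integral_abs_deriv_eq_abs_sub {g g' : ℝ → ℝ} {u v : ℝ} (huv : u ≤ v)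
    (hg : ∀ t ∈ Icc u v, HasDerivAt g (g' t) t) (hint : IntervalIntegrable g' volume u v)
    (hsign : (∀ t ∈ Icc u v, 0 ≤ g' t) ∨ (∀ t ∈ Icc u v, g' t ≤ 0)) :
    ∫ t in u..v, |g' t| = |g v - g u| := by
  rw [← uIcc_of_le huv] at hg hsign
  rcases hsign with hsign | hsign
  · have h : ∫ t in u..v, |g' t| = g v - g u := by
      rw [← intervalIntegral.integral_eq_sub_of_hasDerivAt hg hint]
      exact intervalIntegral.integral_congr fun t ht => abs_of_nonneg (hsign t ht)
    rw [← h, abs_of_nonneg (intervalIntegral.integral_nonneg huv fun t _ => abs_nonneg _)]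
  · have h : ∫ t in u..v, |g' t| = -(g v - g u) := by
      rw [← intervalIntegral.integral_eq_sub_of_hasDerivAt hg hint,
        ← intervalIntegral.integral_neg]
      exact intervalIntegral.integral_congr fun t ht => abs_of_nonpos (hsign t ht)
    rw [← abs_neg, ← h,
      abs_of_nonneg (intervalIntegral.integral_nonneg huv fun t _ => abs_nonneg _)]

section VanDerCorput

variable {f f' f'' : ℝ → ℝ} {u v : ℝ}

theorem integral_fourierChar_comp (hf : ∀ t ∈ uIcc u v, HasDerivAt f (f' t) t)
    (hf' : ∀ t ∈ uIcc u v, HasDerivAt f' (f'' t) t) (hf'' : ContinuousOn f'' (uIcc u v))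
    (hne : ∀ t ∈ uIcc u v, f' t ≠ 0) :
    ∫ t in u..v, (𝐞 (f t) : ℂ) = (2 * π * Complex.I)⁻¹ *
      ((f' v : ℂ)⁻¹ * 𝐞 (f v) - (f' u : ℂ)⁻¹ * 𝐞 (f u)
        - ∫ t in u..v, ((-f'' t / f' t ^ 2 : ℝ) : ℂ) * 𝐞 (f t)) := by
  have hcont_f' : ContinuousOn f' (uIcc u v) := fun t ht =>
    (hf' t ht).continuousAt.continuousWithinAt
  have hcont_e : ContinuousOn (fun t => (𝐞 (f t) : ℂ)) (uIcc u v) := fun t ht =>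
    (Real.hasDerivAt_fourierChar (f t)).continuousAt.comp_continuousWithinAt
      (hf t ht).continuousAt.continuousWithinAt
  have hparts := intervalIntegral.integral_mul_deriv_eq_deriv_mul
    (u := fun t => ((f' t)⁻¹ : ℂ)) (v := fun t => (𝐞 (f t) : ℂ))
    (u' := fun t => ((-f'' t / f' t ^ 2 : ℝ) : ℂ))
    (v' := fun t => 2 * π * Complex.I * 𝐞 (f t) * f' t)
    (fun t ht => by simpa using ((hf' t ht).inv (hne t ht)).ofReal_comp)
    (fun t ht =>
      ((Real.hasDerivAt_fourierChar (f t)).scomp t (hf t ht)).congr_deriv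
        (by rw [Complex.real_smul, mul_comm]))
    (ContinuousOn.intervalIntegrable <| Complex.continuous_ofReal.comp_continuousOn <|
      hf''.neg.div (hcont_f'.pow 2) fun t ht => pow_ne_zero 2 (hne t ht))
    (ContinuousOn.intervalIntegrable <| (continuousOn_const.mul hcont_e).mul <|
      Complex.continuous_ofReal.comp_continuousOn hcont_f')
  rw [← hparts, ← intervalIntegral.integral_const_mul]
  refine intervalIntegral.integral_congr fun t ht => ?_
  have : (f' t : ℂ) ≠ 0 := Complex.ofReal_ne_zero.2 (hne t ht)
  field_simp

theorem norm_integral_fourierChar_comp_le_inv {l : ℝ} (huv : u ≤ v) (hl : 0 < l)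
    (hf : ∀ t ∈ Icc u v, HasDerivAt f (f' t) t) (hf' : ∀ t ∈ Icc u v, HasDerivAt f' (f'' t) t)
    (hf'' : ContinuousOn f'' (Icc u v)) (hlow : ∀ t ∈ Icc u v, l ≤ |f' t|)
    (hsign : (∀ t ∈ Icc u v, 0 ≤ f'' t) ∨ (∀ t ∈ Icc u v, f'' t ≤ 0)) :
    ‖∫ t in u..v, (𝐞 (f t) : ℂ)‖ ≤ l⁻¹ := by
  have hne : ∀ t ∈ Icc u v, f' t ≠ 0 := fun t ht => abs_pos.1 (hl.trans_le (hlow t ht))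
  have hinv : ∀ t ∈ Icc u v, |(f' t)⁻¹| ≤ l⁻¹ := fun t ht => by
    rw [abs_inv]; exact inv_anti₀ hl (hlow t ht)
  have hcont : ContinuousOn (fun t => -f'' t / f' t ^ 2) (Icc u v) :=
    hf''.neg.div (fun t ht => ((hf' t ht).continuousAt.pow 2).continuousWithinAt)
      fun t ht => pow_ne_zero 2 (hne t ht)
  have hvar : ∫ t in u..v, |-f'' t / f' t ^ 2| = |(f' v)⁻¹ - (f' u)⁻¹| :=
    integral_abs_deriv_eq_abs_sub huv (fun t ht => (hf' t ht).inv (hne t ht))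
      (hcont.intervalIntegrable_of_Icc huv) <| hsign.symm.imp
        (fun h t ht => div_nonneg (neg_nonneg.2 (h t ht)) (sq_nonneg _))
        (fun h t ht => div_nonpos_of_nonpos_of_nonneg (neg_nonpos.2 (h t ht)) (sq_nonneg _))
  have hu := hinv u (left_mem_Icc.2 huv)
  have hv := hinv v (right_mem_Icc.2 huv)
  have herr : ‖∫ t in u..v, ((-f'' t / f' t ^ 2 : ℝ) : ℂ) * 𝐞 (f t)‖ ≤ l⁻¹ + l⁻¹ := by
    refine (intervalIntegral.norm_integral_le_integral_norm huv).trans ?_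
    simp_rw [norm_mul, Circle.norm_coe, mul_one, Complex.norm_real, Real.norm_eq_abs, hvar]
    exact (abs_sub _ _).trans (add_le_add hv hu)
  have hend : ∀ t, ‖((f' t : ℂ)⁻¹ * 𝐞 (f t))‖ = |(f' t)⁻¹| := fun t => by
    rw [norm_mul, Circle.norm_coe, mul_one, ← Complex.ofReal_inv, Complex.norm_real,
      Real.norm_eq_abs]
  have hpi : ‖(2 * π * Complex.I : ℂ)⁻¹‖ ≤ 1 / 4 := by
    rw [norm_inv, norm_mul, norm_mul, Complex.norm_I, Complex.norm_ofNat, Complex.norm_real,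
      Real.norm_eq_abs, abs_of_pos pi_pos, mul_one, one_div]
    exact inv_anti₀ (by norm_num) (by linarith [pi_gt_three])
  rw [← uIcc_of_le huv] at hf hf' hf'' hne
  rw [integral_fourierChar_comp hf hf' hf'' hne, norm_mul]
  calc _ ≤ 1 / 4 * (l⁻¹ + l⁻¹ + (l⁻¹ + l⁻¹)) := by
        gcongr
        refine (norm_sub_le _ _).trans (add_le_add ((norm_sub_le _ _).trans ?_) herr)
        rw [hend, hend]
        exact add_le_add hv hu
    _ = l⁻¹ := by ring

end VanDerCorput

theorem norm_integral_le_two_pow_card_mul {E : Type*} [NormedAddCommGroup E] [NormedSpace ℝ E]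
    {g : ℝ → E} (hg : LocallyIntegrable g) {B : ℝ} (Z : Finset ℝ) {u v : ℝ} (huv : u ≤ v)
    (h : ∀ u' v', u ≤ u' → u' ≤ v' → v' ≤ v → (∀ z ∈ Z, z ∉ Ioo u' v') →
      ‖∫ t in u'..v', g t‖ ≤ B) :
    ‖∫ t in u..v, g t‖ ≤ 2 ^ Z.card * B := by
  induction Z using Finset.induction_on generalizing u v with
  | empty => simpa using h u v le_rfl huv le_rfl (by simp)
  | insert z Z hz ih =>
    have hB : 0 ≤ B := by simpa using h u u le_rfl le_rfl huv (by simp)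
    rw [Finset.card_insert_of_notMem hz, pow_succ]
    by_cases hzuv : z ∈ Ioo u v
    · have hleft : ‖∫ t in u..z, g t‖ ≤ 2 ^ Z.card * B :=
        ih hzuv.1.le fun u' v' hu huv' hv hZ =>
          h u' v' hu huv' (hv.trans hzuv.2.le) <|
            Finset.forall_mem_insert .. |>.2 ⟨fun hz' => hz'.2.not_ge hv, hZ⟩
      have hright : ‖∫ t in z..v, g t‖ ≤ 2 ^ Z.card * B :=
        ih hzuv.2.le fun u' v' hu huv' hv hZ =>
          h u' v' (hzuv.1.le.trans hu) huv' hv <|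
            Finset.forall_mem_insert .. |>.2 ⟨fun hz' => hz'.1.not_ge hu, hZ⟩
      rw [← intervalIntegral.integral_add_adjacent_intervals
        (hg.integrableOn_isCompact isCompact_uIcc).intervalIntegrable
        (hg.integrableOn_isCompact isCompact_uIcc).intervalIntegrable]
      linarith [norm_add_le (∫ t in u..z, g t) (∫ t in z..v, g t)]
    · refine (ih huv fun u' v' hu huv' hv hZ => h u' v' hu huv' hv <|
        Finset.forall_mem_insert .. |>.2 ⟨fun hz' => hzuv ?_, hZ⟩).trans ?_
      · exact ⟨hu.trans_lt hz'.1, hz'.2.trans_le hv⟩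
      · nlinarith [show (0 : ℝ) ≤ 2 ^ Z.card * B by positivity]

section PolynomialPhase

open Polynomial

theorem eval_nonneg_or_nonpos_of_roots_notMem_Ioo (q : ℝ[X]) {u v : ℝ}
    (h : ∀ z ∈ q.roots, z ∉ Ioo u v) :
    (∀ t ∈ Icc u v, 0 ≤ q.eval t) ∨ (∀ t ∈ Icc u v, q.eval t ≤ 0) := by
  by_contra! hcon
  obtain ⟨⟨t₁, ht₁, h₁⟩, t₂, ht₂, h₂⟩ := hcon
  obtain ⟨z, hz, hz0 : q.eval z = 0⟩ :=
    intermediate_value_uIcc q.continuous.continuousOn (mem_uIcc.2 (Or.inl ⟨h₁.le, h₂.le⟩))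
  have hz₁ : z ≠ t₁ := by rintro rfl; exact h₁.ne hz0
  have hz₂ : z ≠ t₂ := by rintro rfl; exact h₂.ne' hz0
  refine h z ((mem_roots (by rintro rfl; simp at h₁)).2 hz0) ?_
  rcases mem_uIcc.1 hz with ⟨ha, hb⟩ | ⟨ha, hb⟩
  · exact ⟨ht₁.1.trans_lt (ha.lt_of_ne' hz₁), (hb.lt_of_ne hz₂).trans_le ht₂.2⟩
  · exact ⟨ht₂.1.trans_lt (ha.lt_of_ne' hz₂), (hb.lt_of_ne hz₁).trans_le ht₁.2⟩

theorem abs_derivative_le_or_norm_integral_le {f : ℝ[X]} {l u v : ℝ} (hl : 0 < l) (huv : u ≤ v)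
    (hsub : ∀ z ∈ (derivative f - C l).roots, z ∉ Ioo u v)
    (hadd : ∀ z ∈ (derivative f + C l).roots, z ∉ Ioo u v)
    (hder : ∀ z ∈ (derivative (derivative f)).roots, z ∉ Ioo u v) :
    (∀ t ∈ Icc u v, |(derivative f).eval t| ≤ l) ∨
      ‖∫ t in u..v, (𝐞 (f.eval t) : ℂ)‖ ≤ l⁻¹ := by
  have hlarge (h : ∀ t ∈ Icc u v, l ≤ |(derivative f).eval t|) :
      ‖∫ t in u..v, (𝐞 (f.eval t) : ℂ)‖ ≤ l⁻¹ :=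
    norm_integral_fourierChar_comp_le_inv huv hl (fun t _ => f.hasDerivAt t)
      (fun t _ => (derivative f).hasDerivAt t) (derivative (derivative f)).continuousOn h
      (eval_nonneg_or_nonpos_of_roots_notMem_Ioo _ hder)
  have habove := eval_nonneg_or_nonpos_of_roots_notMem_Ioo _ hsub
  have hbelow := eval_nonneg_or_nonpos_of_roots_notMem_Ioo _ hadd
  simp only [eval_sub, eval_add, eval_C, sub_nonneg, sub_nonpos] at habove hbelow
  rcases habove with habove | habove
  · exact Or.inr (hlarge fun t ht => (habove t ht).trans (le_abs_self _))
  rcases hbelow with hbelow | hbelow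
  · exact Or.inl fun t ht => abs_le.2 ⟨by linarith [hbelow t ht], habove t ht⟩
  · exact Or.inr (hlarge fun t ht => le_abs.2 (Or.inr (by linarith [hbelow t ht])))

theorem exists_Icc_abs_derivative_le {k : ℕ} {f : ℝ[X]} (hf : f.natDegree ≤ k) {a : ℝ} (ha : 0 < a)
    (hint : a / 2 < ‖∫ t in (0 : ℝ)..1, (𝐞 (f.eval t) : ℂ)‖) :
    ∃ u : ℝ, 0 ≤ u ∧ u + a / 2 ^ (3 * k + 1) ≤ 1 ∧
      ∀ t ∈ Icc u (u + a / 2 ^ (3 * k + 1)), |(derivative f).eval t| ≤ 2 ^ (3 * k + 1) / a := by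
  by_contra! hcon
  set b : ℝ := a / 2 ^ (3 * k + 1) with hb
  have hb_inv : 2 ^ (3 * k + 1) / a = b⁻¹ := (inv_div _ _).symm
  have hbpos : 0 < b := by positivity
  rw [hb_inv] at hcon
  set Z : Finset ℝ := ((derivative f - C b⁻¹).roots + (derivative f + C b⁻¹).roots
    + (derivative (derivative f)).roots).toFinset with hZ
  have hcard : Z.card ≤ 3 * k := by
    have hd : (derivative f).natDegree ≤ k := (natDegree_derivative_le f).trans (by omega)
    have h₁ := (card_roots' (derivative f - C b⁻¹)).trans_eq (natDegree_sub_C)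
    have h₂ := (card_roots' (derivative f + C b⁻¹)).trans_eq (natDegree_add_C)
    have h₃ := (card_roots' (derivative (derivative f))).trans (natDegree_derivative_le _)
    refine (Multiset.toFinset_card_le _).trans ?_
    rw [Multiset.card_add, Multiset.card_add]
    omega
  have hcont : Continuous fun t => (𝐞 (f.eval t) : ℂ) := by fun_prop
  refine hint.not_ge ((norm_integral_le_two_pow_card_mul (B := b) hcont.locallyIntegrable Z
    zero_le_one fun u v hu huv hv hav => ?_).trans ?_)
  · simp only [hZ, Multiset.mem_toFinset, Multiset.mem_add, or_imp, forall_and] at hav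
    rcases abs_derivative_le_or_norm_integral_le (inv_pos.2 hbpos) huv hav.1.1 hav.1.2 hav.2
      with hsmall | hdecay
    · have hlen : v - u < b := by
        by_contra! hlen
        obtain ⟨t, ht, hlarge⟩ := hcon u hu (by linarith)
        exact hlarge.not_ge (hsmall t ⟨ht.1, by linarith [ht.2]⟩)
      refine (intervalIntegral.norm_integral_le_of_norm_le_const (C := 1) fun t _ =>
        (Circle.norm_coe _).le).trans ?_
      rw [one_mul, abs_of_nonneg (sub_nonneg.2 huv)]
      exact hlen.le
    · rwa [inv_inv] at hdecay
  · calc 2 ^ Z.card * b ≤ 2 ^ (3 * k) * b := by gcongr; norm_num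
      _ = a / 2 := by rw [hb, pow_succ]; field_simp

theorem exists_abs_coeff_le_of_abs_eval_le (k : ℕ) :
    ∃ A : ℝ, 0 < A ∧ ∀ (q : ℝ[X]) (M : ℝ), q.natDegree ≤ k → (∀ t ∈ Icc (0 : ℝ) 1, |q.eval t| ≤ M) →
      ∀ j, |q.coeff j| ≤ A * M := by
  set v : Fin (k + 1) → ℝ := fun i => (i : ℝ) / (k + 1)
  have hv : ∀ i, v i ∈ Icc (0 : ℝ) 1 := fun i =>
    ⟨by positivity, div_le_one_of_le₀ (by exact_mod_cast i.2.le) (by positivity)⟩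
  have hinj : Function.Injective v := fun i j hij => by
    have hij : (i : ℝ) = j := by simpa [v, Nat.cast_add_one_ne_zero k] using hij
    exact Fin.ext (by exact_mod_cast hij)
  set A : ℕ → ℝ := fun j => ∑ i, |(Lagrange.basis Finset.univ v i).coeff j|
  have hA : ∀ j, 0 ≤ A j := fun j => Finset.sum_nonneg fun i _ => abs_nonneg _
  refine ⟨1 + ∑ j ∈ Finset.range (k + 1), A j,
    by positivity, fun q M hq hM j => ?_⟩
  have hM0 : 0 ≤ M := (abs_nonneg _).trans (hM 0 (by simp))
  have hcoeff : |q.coeff j| ≤ A j * M := by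
    have hdeg : q.degree < (Finset.univ : Finset (Fin (k + 1))).card := by
      rw [Finset.card_fin]
      exact degree_le_natDegree.trans_lt (by exact_mod_cast Nat.lt_succ_of_le hq)
    rw [Lagrange.eq_interpolate hinj.injOn hdeg, Lagrange.interpolate_apply, finsetSum_coeff,
      Finset.sum_mul]
    refine (Finset.abs_sum_le_sum_abs _ _).trans (Finset.sum_le_sum fun i _ => ?_)
    rw [coeff_C_mul, abs_mul, mul_comm]
    exact mul_le_mul_of_nonneg_left (hM _ (hv i)) (abs_nonneg _)
  rcases lt_or_ge j (k + 1) with hj | hj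
  · refine hcoeff.trans (mul_le_mul_of_nonneg_right ?_ hM0)
    linarith [Finset.single_le_sum (fun j _ => hA j) (Finset.mem_range.2 hj)]
  · rw [coeff_eq_zero_of_natDegree_lt (by omega), abs_zero]
    positivity

theorem exists_abs_coeff_taylor_le_of_abs_eval_le (k : ℕ) :
    ∃ A : ℝ, 0 < A ∧ ∀ (q : ℝ[X]) (t b M : ℝ), q.natDegree ≤ k → 0 < b →
      (∀ s ∈ Icc t (t + b), |q.eval s| ≤ M) → ∀ j, |(taylor t q).coeff j| ≤ A * M / b ^ j := by
  obtain ⟨A, hApos, hA⟩ := exists_abs_coeff_le_of_abs_eval_le k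
  refine ⟨A, hApos, fun q t b M hq hb hM j => ?_⟩
  have hdeg : ((taylor t q).comp (C b * X)).natDegree ≤ k := by
    rw [natDegree_comp, natDegree_taylor, natDegree_C_mul_X b hb.ne', mul_one]
    exact hq
  have hbound := hA ((taylor t q).comp (C b * X)) M hdeg (fun s hs => by
    rw [eval_comp, eval_mul, eval_C, eval_X, taylor_eval]
    exact hM _ ⟨by nlinarith [hs.1], by nlinarith [hs.2]⟩) j
  rwa [comp_C_mul_X_coeff, abs_mul, abs_of_pos (pow_pos hb j), ← le_div_iff₀ (pow_pos hb j)]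
    at hbound

theorem coeff_taylor_derivative {R : Type*} [CommRing R] (r : R) (f : R[X]) (j : ℕ) :
    (taylor r (derivative f)).coeff j = (taylor r f).coeff (j + 1) * (j + 1) := by
  rw [← coeff_derivative, taylor_apply, taylor_apply, derivative_comp, derivative_add, derivative_X,
    derivative_C, add_zero, one_mul]

theorem exists_Icc_abs_coeff_taylor_le (k : ℕ) :
    ∃ K : ℝ, 1 ≤ K ∧ ∀ (f : ℝ[X]) (a : ℝ), f.natDegree ≤ k → 0 < a →
      a / 2 < ‖∫ t in (0 : ℝ)..1, (𝐞 (f.eval t) : ℂ)‖ →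
      ∃ u : ℝ, 0 ≤ u ∧ u + a / K ≤ 1 ∧
        ∀ t ∈ Icc u (u + a / K), ∀ j, 1 ≤ j → j ≤ k → |(taylor t f).coeff j| ≤ K / a ^ j := by
  obtain ⟨A, hApos, hA⟩ := exists_abs_coeff_taylor_le_of_abs_eval_le k
  set D : ℝ := 2 ^ (3 * k + 1)
  have hD : 1 ≤ D := one_le_pow₀ one_le_two
  have hKD : 2 * D ≤ (A + 1) * (2 * D) ^ (k + 1) :=
    (le_self_pow₀ (by linarith) k.succ_ne_zero).trans
      (le_mul_of_one_le_left (by positivity) (by linarith))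
  refine ⟨(A + 1) * (2 * D) ^ (k + 1), by linarith, fun f a hf ha hint => ?_⟩
  set K : ℝ := (A + 1) * (2 * D) ^ (k + 1) with hK
  obtain ⟨u, hu, hu1, hder⟩ := exists_Icc_abs_derivative_le hf ha hint
  have hhalf : a / (2 * D) + a / (2 * D) = a / D := by field_simp; norm_num
  have hbpos : 0 < a / (2 * D) := by positivity
  have haK : a / K ≤ a / (2 * D) := by gcongr
  refine ⟨u, hu, by linarith, fun t ht j hj hjk => ?_⟩
  obtain ⟨j, rfl⟩ := Nat.exists_eq_add_of_le' hj
  have hcoeff := hA (derivative f) t (a / (2 * D)) (D / a)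
    ((natDegree_derivative_le f).trans (by omega)) hbpos
    (fun s hs => hder s ⟨ht.1.trans hs.1, by linarith [hs.2, ht.2]⟩) j
  rw [coeff_taylor_derivative, abs_mul] at hcoeff
  calc |(taylor t f).coeff (j + 1)| ≤ |(taylor t f).coeff (j + 1)| * |(j + 1 : ℝ)| :=
        le_mul_of_one_le_right (abs_nonneg _)
          ((le_add_of_nonneg_left (Nat.cast_nonneg j)).trans (le_abs_self _))
    _ ≤ A * (D / a) / (a / (2 * D)) ^ j := hcoeff
    _ = A * (D * (2 * D) ^ j) / a ^ (j + 1) := by rw [div_pow, pow_succ' a]; field_simp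
    _ ≤ (A + 1) * ((2 * D) * (2 * D) ^ k) / a ^ (j + 1) := by
        gcongr <;> linarith
    _ = K / a ^ (j + 1) := by rw [hK, pow_succ' (2 * D)]

end PolynomialPhase

section Plancherel

variable {V F : Type*} [NormedAddCommGroup V] [InnerProductSpace ℝ V] [FiniteDimensional ℝ V]
  [MeasurableSpace V] [BorelSpace V] [NormedAddCommGroup F] [InnerProductSpace ℂ F]
  [CompleteSpace F]

theorem fourier_ae_eq_fourier_toLp {f : V → F} (hf₁ : Integrable f) (hf₂ : MemLp f 2) :
    𝓕 f =ᵐ[volume] (𝓕 hf₂.toLp : Lp F 2 (volume : Measure V)) := by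
  have hcont : Continuous (𝓕 f) := VectorFourier.fourierIntegral_continuous
    Real.continuous_fourierChar continuous_inner hf₁
  refine ae_eq_of_integral_contDiff_smul_eq hcont.locallyIntegrable
    ((Lp.memLp _).locallyIntegrable one_le_two) fun g hg_smooth hg_supp => ?_
  set φ : SchwartzMap V ℂ := (hg_supp.comp_left (g := Complex.ofRealCLM) rfl).toSchwartzMap
    (Complex.ofRealCLM.contDiff.comp hg_smooth)
  have hφ : ∀ x (y : F), φ x • y = g x • y := fun x y => Complex.coe_smul (g x) y
  calc ∫ x, g x • 𝓕 f x = ∫ x, φ x • 𝓕 f x := by simp_rw [hφ]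
    _ = ∫ x, 𝓕 φ x • f x := by
      have h := VectorFourier.integral_fourierIntegral_smul_eq_flip (L := innerₗ V)
        Real.continuous_fourierChar continuous_inner (φ.integrable (μ := volume)) hf₁
      rw [flip_innerₗ] at h
      exact h.symm
    _ = ∫ x, 𝓕 φ x • hf₂.toLp f x :=
      integral_congr_ae (hf₂.coeFn_toLp.mono fun x hx => by simp only [hx])
    _ = ∫ x, φ x • (𝓕 hf₂.toLp : Lp F 2 (volume : Measure V)) x := by
      have h := DFunLike.congr_fun (Lp.fourier_toTemperedDistribution_eq hf₂.toLp) φ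
      rwa [TemperedDistribution.fourier_apply, Lp.toTemperedDistribution_apply,
        Lp.toTemperedDistribution_apply] at h
    _ = ∫ x, g x • (𝓕 hf₂.toLp : Lp F 2 (volume : Measure V)) x := by simp_rw [hφ]

theorem lintegral_enorm_fourier_sq_eq {f : V → F} (hf₁ : Integrable f) (hf₂ : MemLp f 2) :
    ∫⁻ w, ‖𝓕 f w‖ₑ ^ 2 = ∫⁻ v, ‖f v‖ₑ ^ 2 := by
  have hnorm : ∀ g : V → F, ∫⁻ x, ‖g x‖ₑ ^ 2 = eLpNorm g 2 volume ^ 2 := fun g => by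
    simpa using (eLpNorm_nnreal_pow_eq_lintegral (f := g) (μ := volume) two_ne_zero).symm
  rw [hnorm, hnorm, eLpNorm_congr_ae (fourier_ae_eq_fourier_toLp hf₁ hf₂),
    ← Lp.enorm_def, ← eLpNorm_congr_ae hf₂.coeFn_toLp, ← Lp.enorm_def,
    ← ofReal_norm, ← ofReal_norm, Lp.norm_fourier_eq]

variable {ι : Type*} [Fintype ι]

theorem lintegral_enorm_sq_integral_fourierChar_smul_eq {f : (ι → ℝ) → F} (hf₁ : Integrable f)
    (hf₂ : MemLp f 2) :
    ∫⁻ r : ι → ℝ, ‖∫ v, 𝐞 (∑ m, r m * v m) • f v‖ₑ ^ 2 = ∫⁻ v, ‖f v‖ₑ ^ 2 := by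
  have hofLp := PiLp.volume_preserving_ofLp ι
  have hemb : MeasurableEmbedding (WithLp.ofLp : EuclideanSpace ℝ ι → ι → ℝ) :=
    (MeasurableEquiv.toLp 2 (ι → ℝ)).symm.measurableEmbedding
  have hplancherel := lintegral_enorm_fourier_sq_eq (hofLp.integrable_comp_of_integrable hf₁)
    (hf₂.comp_measurePreserving hofLp)
  simp only [Function.comp_apply] at hplancherel
  rw [← hofLp.lintegral_comp_emb hemb, ← hofLp.lintegral_comp_emb hemb (fun v => ‖f v‖ₑ ^ 2),
    ← hplancherel, ← lintegral_neg_eq_self]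
  refine lintegral_congr fun w => ?_
  rw [Real.fourier_eq, ← hofLp.integral_comp hemb]
  simp [PiLp.inner_apply]

theorem lintegral_enorm_sq_setIntegral_fourierChar_smul_le {S : Set (ι → ℝ)} (hS : MeasurableSet S)
    {f : (ι → ℝ) → F} (hf : IntegrableOn f S) :
    ∫⁻ r : ι → ℝ, ‖∫ v in S, 𝐞 (∑ m, r m * v m) • f v‖ₑ ^ 2 ≤ ∫⁻ v in S, ‖f v‖ₑ ^ 2 := by
  rcases eq_or_ne (∫⁻ v in S, ‖f v‖ₑ ^ 2) ⊤ with htop | hfin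
  · exact htop ▸ le_top
  have hmemLp : MemLp (S.indicator f) 2 := by
    refine (memLp_indicator_iff_restrict hS).2 ⟨hf.1, ?_⟩
    rw [eLpNorm_lt_top_iff_lintegral_rpow_enorm_lt_top two_ne_zero ENNReal.ofNat_ne_top]
    simpa using hfin.lt_top
  have hplancherel :=
    lintegral_enorm_sq_integral_fourierChar_smul_eq (hf.integrable_indicator hS) hmemLp
  simp_rw [← indicator_smul, integral_indicator hS] at hplancherel
  rw [hplancherel, ← lintegral_indicator hS]
  refine lintegral_mono fun v => ?_
  by_cases hv : v ∈ S <;> simp [hv]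

theorem lintegral_enorm_sq_setIntegral_fourierChar_comp_le {Q : Set (ι → ℝ)}
    {Φ : (ι → ℝ) → ι → ℝ} {Φ' : (ι → ℝ) → (ι → ℝ) →L[ℝ] ι → ℝ} (hQ : MeasurableSet Q)
    (hΦ' : ∀ s ∈ Q, HasFDerivWithinAt Φ (Φ' s) Q s) (hinj : InjOn Φ Q) {c : ℝ} (hc : 0 < c)
    (hdet : ∀ s ∈ Q, c ≤ |(Φ' s).det|) {f : (ι → ℝ) → F} (hf : IntegrableOn f Q) :
    ∫⁻ r : ι → ℝ, ‖∫ s in Q, 𝐞 (∑ m, r m * Φ s m) • f s‖ₑ ^ 2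
      ≤ ENNReal.ofReal c⁻¹ * ∫⁻ s in Q, ‖f s‖ₑ ^ 2 := by
  set g : (ι → ℝ) → F := fun v =>
    |(Φ' (Function.invFunOn Φ Q v)).det|⁻¹ • f (Function.invFunOn Φ Q v) with hg
  have hdet_pos : ∀ s ∈ Q, 0 < |(Φ' s).det| := fun s hs => hc.trans_le (hdet s hs)
  have hg_image : ∀ s ∈ Q, g (Φ s) = |(Φ' s).det|⁻¹ • f s := fun s hs => by
    simp only [hg, hinj.leftInvOn_invFunOn hs]
  have hcancel : ∀ s ∈ Q, |(Φ' s).det| • g (Φ s) = f s := fun s hs => by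
    rw [hg_image s hs, smul_inv_smul₀ (hdet_pos s hs).ne']
  have hg_int : IntegrableOn g (Φ '' Q) :=
    (integrableOn_image_iff_integrableOn_abs_det_fderiv_smul volume hQ hΦ' hinj g).2
      (hf.congr_fun (fun s hs => (hcancel s hs).symm) hQ)
  have hphase : ∀ r : ι → ℝ, ∫ s in Q, 𝐞 (∑ m, r m * Φ s m) • f s
      = ∫ v in Φ '' Q, 𝐞 (∑ m, r m * v m) • g v := fun r => by
    rw [integral_image_eq_integral_abs_det_fderiv_smul volume hQ hΦ' hinj]
    refine setIntegral_congr_fun hQ fun s hs => ?_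
    simp only [smul_comm _ (𝐞 _), hcancel s hs]
  simp_rw [hphase]
  refine (lintegral_enorm_sq_setIntegral_fourierChar_smul_le
    (measurable_image_of_fderivWithin hQ hΦ' hinj) hg_int).trans ?_
  rw [lintegral_image_eq_lintegral_abs_det_fderiv_mul volume hQ hΦ' hinj,
    ← lintegral_const_mul' _ _ ENNReal.ofReal_ne_top]
  refine setLIntegral_mono' hQ fun s hs => ?_
  rw [hg_image s hs, enorm_smul, mul_pow, ← mul_assoc, Real.enorm_eq_ofReal (by positivity),
    ← ENNReal.ofReal_pow (by positivity), ← ENNReal.ofReal_mul (abs_nonneg _),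
    show |(Φ' s).det| * |(Φ' s).det|⁻¹ ^ 2 = |(Φ' s).det|⁻¹ by
      have := (hdet_pos s hs).ne'
      field_simp]
  gcongr
  exact hdet s hs

end Plancherel

section PowerSums

variable {n : ℕ}

/-- The power sums `s₁ + ⋯ + sₙ, …, s₁ⁿ + ⋯ + sₙⁿ` of a tuple; coordinate `m` has exponent
`m + 1`. -/
def powerSums (s : Fin n → ℝ) (m : Fin n) : ℝ := ∑ i, s i ^ ((m : ℕ) + 1)

theorem aeval_esymm_eq_of_powerSums_eq {s t : Fin n → ℝ} (h : powerSums s = powerSums t) :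
    ∀ j ≤ n, MvPolynomial.aeval s (MvPolynomial.esymm (Fin n) ℝ j)
      = MvPolynomial.aeval t (MvPolynomial.esymm (Fin n) ℝ j) := by
  intro j
  induction j using Nat.strong_induction_on with
  | h j ih =>
    intro hj
    rcases Nat.eq_zero_or_pos j with rfl | hpos
    · simp
    have hpsum : ∀ l, 1 ≤ l → l ≤ n → ∑ i, s i ^ l = ∑ i, t i ^ l := fun l hl hln => by
      simpa [powerSums, Nat.sub_add_cancel hl] using congrFun h ⟨l - 1, by omega⟩
    have newton : ∀ w : Fin n → ℝ, (j : ℝ) * MvPolynomial.aeval w (MvPolynomial.esymm (Fin n) ℝ j)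
        = (-1) ^ (j + 1) * ∑ a ∈ Finset.HasAntidiagonal.antidiagonal j with a.1 < j,
          (-1) ^ a.1 * MvPolynomial.aeval w (MvPolynomial.esymm (Fin n) ℝ a.1) *
            ∑ i, w i ^ a.2 := fun w => by
      simpa [MvPolynomial.psum] using
        congrArg (MvPolynomial.aeval w) (MvPolynomial.mul_esymm_eq_sum (Fin n) ℝ j)
    refine mul_left_cancel₀ (Nat.cast_ne_zero.2 hpos.ne') ?_
    rw [newton s, newton t]
    congr 1
    refine Finset.sum_congr rfl fun a ha => ?_
    simp only [Finset.mem_filter, Finset.HasAntidiagonal.mem_antidiagonal] at ha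
    rw [ih a.1 ha.2 (by omega), hpsum a.2 (by omega) (by omega)]

theorem range_eq_of_powerSums_eq {s t : Fin n → ℝ} (h : powerSums s = powerSums t) :
    range s = range t := by
  have hprod : ((Finset.univ.val.map s).map fun x => Polynomial.X - Polynomial.C x).prod
      = ((Finset.univ.val.map t).map fun x => Polynomial.X - Polynomial.C x).prod := by
    simp only [Multiset.prod_X_sub_X_eq_sum_esymm, Multiset.card_map, Finset.card_val,
      Finset.card_univ, Fintype.card_fin]
    refine Finset.sum_congr rfl fun j hj => ?_
    rw [← MvPolynomial.aeval_esymm_eq_multiset_esymm (Fin n) ℝ,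
      ← MvPolynomial.aeval_esymm_eq_multiset_esymm (Fin n) ℝ,
      aeval_esymm_eq_of_powerSums_eq h j (Finset.mem_range_succ_iff.1 hj)]
  have hroots := congrArg Polynomial.roots hprod
  rw [Polynomial.roots_multiset_prod_X_sub_C, Polynomial.roots_multiset_prod_X_sub_C] at hroots
  ext x
  simpa using congrArg (x ∈ ·) hroots

theorem injOn_powerSums_strictMono : InjOn (powerSums (n := n)) {s | StrictMono s} :=
  fun _ hs _ ht h => (hs.range_inj ht).1 (range_eq_of_powerSums_eq h)

theorem hasFDerivAt_powerSums (s : Fin n → ℝ) :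
    HasFDerivAt powerSums (Matrix.toLin' (Matrix.of fun m i : Fin n =>
      ((m : ℕ) + 1 : ℝ) * s i ^ (m : ℕ))).toContinuousLinearMap s := by
  refine hasFDerivAt_pi'.2 fun m => ?_
  have h := HasFDerivAt.fun_sum (u := Finset.univ) fun i _ =>
    (hasFDerivAt_apply (𝕜 := ℝ) i s).pow ((m : ℕ) + 1)
  refine h.congr_fderiv ?_
  ext v
  simp [Matrix.mulVec, dotProduct]

theorem pow_choose_two_le_abs_det_jacobian_powerSums {ρ : ℝ} (hρ : 0 < ρ) {s : Fin n → ℝ}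
    (hs : ∀ i j, i < j → s i + ρ ≤ s j) :
    ρ ^ n.choose 2 ≤
      |(Matrix.of fun m i : Fin n => ((m : ℕ) + 1 : ℝ) * s i ^ (m : ℕ)).det| := by
  have hdet : (Matrix.of fun m i : Fin n => ((m : ℕ) + 1 : ℝ) * s i ^ (m : ℕ)).det
      = (∏ m : Fin n, ((m : ℕ) + 1 : ℝ)) * ∏ i : Fin n, ∏ j ∈ Finset.Ioi i, (s j - s i) := by
    rw [← Matrix.det_vandermonde, ← Matrix.det_transpose (Matrix.vandermonde s)]
    exact Matrix.det_mul_column _ _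
  have hvandermonde : ρ ^ n.choose 2 ≤ ∏ i : Fin n, ∏ j ∈ Finset.Ioi i, (s j - s i) := by
    calc ρ ^ n.choose 2 = ∏ i : Fin n, ∏ _j ∈ Finset.Ioi i, ρ := by
          simp only [Finset.prod_const, Fin.card_Ioi, Finset.prod_pow_eq_pow_sum]
          rw [Fin.sum_univ_eq_sum_range (fun i => n - 1 - i), Finset.sum_range_reflect (fun i => i),
            Finset.sum_range_id, Nat.choose_two_right]
      _ ≤ _ := Finset.prod_le_prod (fun _ _ => Finset.prod_nonneg fun _ _ => hρ.le) fun i _ =>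
          Finset.prod_le_prod (fun _ _ => hρ.le) fun j hj => by
            linarith [hs i j (Finset.mem_Ioi.1 hj)]
  have hfact : (1 : ℝ) ≤ ∏ m : Fin n, ((m : ℕ) + 1 : ℝ) := by
    refine (Finset.prod_const_one (s := Finset.univ)).symm.le.trans
      (Finset.prod_le_prod (fun _ _ => zero_le_one) fun m _ => ?_)
    linarith [(m : ℕ).cast_nonneg (α := ℝ)]
  rw [hdet]
  refine le_trans ?_ (le_abs_self _)
  exact hvandermonde.trans (le_mul_of_one_le_left ((pow_nonneg hρ.le _).trans hvandermonde) hfact)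

theorem lintegral_enorm_sq_setIntegral_fourierChar_powerSums_le {F : Type*} [NormedAddCommGroup F]
    [InnerProductSpace ℂ F] [CompleteSpace F] {Q : Set (Fin n → ℝ)} (hQ : MeasurableSet Q) {ρ : ℝ}
    (hρ : 0 < ρ) (hsep : ∀ s ∈ Q, ∀ i j, i < j → s i + ρ ≤ s j) {f : (Fin n → ℝ) → F}
    (hf : IntegrableOn f Q) :
    ∫⁻ r : Fin n → ℝ, ‖∫ s in Q, 𝐞 (∑ m, r m * powerSums s m) • f s‖ₑ ^ 2
      ≤ ENNReal.ofReal (ρ ^ n.choose 2)⁻¹ * ∫⁻ s in Q, ‖f s‖ₑ ^ 2 := by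
  have hmono : Q ⊆ {s | StrictMono s} := fun s hs i j hij => by
    linarith [hsep s hs i j hij]
  refine lintegral_enorm_sq_setIntegral_fourierChar_comp_le hQ
    (fun s _ => (hasFDerivAt_powerSums s).hasFDerivWithinAt)
    (injOn_powerSums_strictMono.mono hmono) (by positivity) (fun s hs => ?_) hf
  rw [LinearMap.det_toContinuousLinearMap, LinearMap.det_toLin']
  exact pow_choose_two_le_abs_det_jacobian_powerSums hρ (hsep s hs)

end PowerSums

theorem injective_of_pairwise_le_abs_sub {ι : Type*} {s : ι → ℝ} {g : ℝ} (hg : 0 < g)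
    (hs : Pairwise fun i j => g ≤ |s i - s j|) : Function.Injective s :=
  Function.injective_iff_pairwise_ne.2 fun _ _ hij h => hg.not_ge (by simpa [h] using hs hij)

theorem pow_le_abs_prod {ι : Type*} {g : ℝ} (hg : 0 < g) (hg1 : g ≤ 1) {I : Finset ι}
    {f : ι → ℝ} {n : ℕ} (hn : I.card ≤ n) (hf : ∀ i ∈ I, g ≤ |f i|) :
    g ^ n ≤ |∏ i ∈ I, f i| := by
  rw [Finset.abs_prod]
  calc g ^ n ≤ g ^ I.card := pow_le_pow_of_le_one hg.le hg1 hn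
    _ = ∏ _i ∈ I, g := (Finset.prod_const g).symm
    _ ≤ ∏ i ∈ I, |f i| := Finset.prod_le_prod (fun _ _ => hg.le) hf

section DividedDifferences

open Polynomial

variable {ι F : Type*} [DecidableEq ι] [Field F] {s : ι → F}

/-- The divided difference of the values `f` at the nodes `s i`, `i ∈ I`. -/
def dividedDiff (I : Finset ι) (s f : ι → F) : F :=
  ∑ i ∈ I, Lagrange.nodalWeight I s i * f i

theorem dividedDiff_sum_mul {κ : Type*} (I : Finset ι) (J : Finset κ) (f : κ → ι → F)
    (c : κ → F) :
    dividedDiff I s (fun i => ∑ δ ∈ J, f δ i * c δ) = ∑ δ ∈ J, dividedDiff I s (f δ) * c δ := by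
  simp_rw [dividedDiff, Finset.mul_sum, Finset.sum_mul, mul_assoc]
  exact Finset.sum_comm

theorem dividedDiff_eval_eq_zero (hs : Function.Injective s) (I : Finset ι) {P : F[X]}
    (hP : P.natDegree + 1 < I.card) : dividedDiff I s (fun i => P.eval (s i)) = 0 := by
  have hdeg : P.degree < I.card :=
    P.degree_le_natDegree.trans_lt (by exact_mod_cast (by omega : P.natDegree < I.card))
  have h := Lagrange.coeff_eq_sum (s := I) hs.injOn hdeg
  rw [coeff_eq_zero_of_natDegree_lt (by omega)] at h
  simp_rw [dividedDiff, h, Lagrange.nodalWeight, Finset.prod_inv_distrib, div_eq_inv_mul]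

theorem dividedDiff_union_prod_sub_mul (hs : Function.Injective s) {I J : Finset ι}
    (hIJ : Disjoint I J) (f : ι → F) :
    dividedDiff (I ∪ J) s (fun i => (∏ j ∈ J, (s i - s j)) * f i) = dividedDiff I s f := by
  rw [dividedDiff, Finset.sum_union hIJ, dividedDiff,
    Finset.sum_eq_zero (s := J) fun i hi => by
      rw [Finset.prod_eq_zero hi (sub_self _), zero_mul, mul_zero], add_zero]
  refine Finset.sum_congr rfl fun i hi => ?_
  have hiJ : i ∉ J := Finset.disjoint_left.1 hIJ hi
  have hne : ∏ j ∈ J, (s i - s j) ≠ 0 := Finset.prod_ne_zero_iff.2 fun j hj =>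
    sub_ne_zero.2 (hs.ne (ne_of_mem_of_not_mem hj hiJ).symm)
  rw [Lagrange.nodalWeight, Finset.erase_union_distrib, Finset.erase_eq_of_notMem hiJ,
    Finset.prod_union (hIJ.mono_left (Finset.erase_subset _ _)), Finset.prod_inv_distrib (s := J),
    mul_assoc, inv_mul_cancel_left₀ hne, Lagrange.nodalWeight]

theorem dividedDiff_triple (hs : Function.Injective s) {p q r : ι} (hpq : p ≠ q) (hpr : p ≠ r)
    (hqr : q ≠ r) (f : ι → F) :
    dividedDiff {p, q, r} s f
      = (f r - (f p + (f q - f p) / (s q - s p) * (s r - s p)))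
        / ((s r - s p) * (s r - s q)) := by
  have hp : ({p, q, r} : Finset ι).erase p = {q, r} := by grind
  have hq : ({p, q, r} : Finset ι).erase q = {p, r} := by grind
  have hr : ({p, q, r} : Finset ι).erase r = {p, q} := by grind
  rw [dividedDiff, Finset.sum_insert (by simp [hpq, hpr]), Finset.sum_pair hqr]
  simp only [Lagrange.nodalWeight, hp, hq, hr, Finset.prod_pair hpq, Finset.prod_pair hpr,
    Finset.prod_pair hqr]
  have h₁ : s q - s p ≠ 0 := sub_ne_zero.2 (hs.ne hpq.symm)
  have h₂ : s r - s p ≠ 0 := sub_ne_zero.2 (hs.ne hpr.symm)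
  have h₃ : s r - s q ≠ 0 := sub_ne_zero.2 (hs.ne hqr.symm)
  rw [← neg_sub (s q) (s p), ← neg_sub (s r) (s p), ← neg_sub (s r) (s q)]
  field_simp
  ring

theorem abs_dividedDiff_le {g M : ℝ} (hg : 0 < g) (hg1 : g ≤ 1) {I : Finset ι} {s f : ι → ℝ}
    {n : ℕ} (hn : I.card ≤ n) (hs : Pairwise fun i j => g ≤ |s i - s j|) (hM : 0 ≤ M)
    (hf : ∀ i ∈ I, |f i| ≤ M) : |dividedDiff I s f| ≤ n * g⁻¹ ^ n * M := by
  calc |dividedDiff I s f| ≤ ∑ i ∈ I, |Lagrange.nodalWeight I s i * f i| :=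
        Finset.abs_sum_le_sum_abs _ _
    _ ≤ ∑ _i ∈ I, g⁻¹ ^ n * M := by
        refine Finset.sum_le_sum fun i hi => ?_
        rw [abs_mul, Lagrange.nodalWeight, Finset.prod_inv_distrib, abs_inv, inv_pow]
        gcongr
        · exact pow_le_abs_prod hg hg1 ((Finset.card_le_card (Finset.erase_subset _ _)).trans hn)
            fun j hj => hs (Finset.ne_of_mem_erase hj).symm
        · exact hf i hi
    _ ≤ n * g⁻¹ ^ n * M := by
        rw [Finset.sum_const, nsmul_eq_mul, mul_assoc]
        gcongr

end DividedDifferences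

section TriangularSystems

variable {ι : Type*} [Fintype ι] [DecidableEq ι]

theorem det_eq_prod_diag_of_blockTriangular_injective {R α : Type*} [CommRing R] [LinearOrder α]
    {A : Matrix ι ι R} {b : ι → α} (hA : A.BlockTriangular b) (hb : Function.Injective b) :
    A.det = ∏ i, A i i := by
  let : LinearOrder ι := LinearOrder.lift' b hb
  convert Matrix.det_of_isUpperTriangular (M := A) fun i j hij => hA hij

theorem volume_forall_abs_mulVec_le (A : Matrix ι ι ℝ) (hA : A.det ≠ 0) (b : ι → ℝ) :
    volume {x : ι → ℝ | ∀ i, |(A.mulVec x) i| ≤ b i}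
      = ENNReal.ofReal |A.det⁻¹| * ∏ i, ENNReal.ofReal (2 * b i) := by
  have hpreimage : {x : ι → ℝ | ∀ i, |(A.mulVec x) i| ≤ b i}
      = Matrix.toLin' A ⁻¹' Icc (fun i => -b i) b := by
    ext x
    simp only [mem_ofPred_eq, mem_preimage, Matrix.toLin'_apply, mem_Icc, Pi.le_def, abs_le]
    exact forall_and
  rw [hpreimage, Measure.addHaar_preimage_linearMap _ (by rwa [LinearMap.det_toLin']),
    LinearMap.det_toLin', Real.volume_Icc_pi]
  simp only [sub_neg_eq_add, two_mul]

theorem volume_forall_abs_mulVec_le_le_prod {A : Matrix ι ι ℝ} {d b m : ι → ℝ}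
    (hdet : A.det = ∏ i, d i) (hd : ∀ i, d i ≠ 0) (hm : ∀ i, 2 * b i * |d i|⁻¹ ≤ m i) :
    volume {x : ι → ℝ | ∀ i, |(A.mulVec x) i| ≤ b i} ≤ ∏ i, ENNReal.ofReal (m i) := by
  rw [volume_forall_abs_mulVec_le A (hdet ▸ Finset.prod_ne_zero_iff.2 fun i _ => hd i), hdet,
    abs_inv, Finset.abs_prod, ← Finset.prod_inv_distrib,
    ENNReal.ofReal_prod_of_nonneg fun i _ => inv_nonneg.2 (abs_nonneg _),
    ← Finset.prod_mul_distrib]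
  refine Finset.prod_le_prod' fun i _ => ?_
  rw [← ENNReal.ofReal_mul (inv_nonneg.2 (abs_nonneg _)), mul_comm]
  exact ENNReal.ofReal_le_ofReal (hm i)

end TriangularSystems

instance (k : ℕ) : DecidableEq (Idx k) := by unfold Idx; infer_instance

/-- The multi-indices of `Idx k` which involve the second variable. -/
abbrev HighIdx (k : ℕ) : Type := {β : Idx k // 1 ≤ (β.1.2 : ℕ)}

namespace HighIdx

variable {k : ℕ}

/-- The exponent of the first variable. -/
def e₁ (β : HighIdx k) : ℕ := β.1.1.1

/-- The exponent of the second variable. -/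
def e₂ (β : HighIdx k) : ℕ := β.1.1.2

theorem one_le_e₂ (β : HighIdx k) : 1 ≤ β.e₂ := β.2

theorem e₁_add_e₂_le (β : HighIdx k) : β.e₁ + β.e₂ ≤ k := β.1.2.2

theorem ext_exponents {β γ : HighIdx k} (h₁ : β.e₁ = γ.e₁) (h₂ : β.e₂ = γ.e₂) : β = γ :=
  Subtype.ext (Subtype.ext (Prod.ext (Fin.ext h₁) (Fin.ext h₂)))

/-- The multi-index with prescribed exponents. -/
def ofExponents (m l : ℕ) (hl : 1 ≤ l) (h : m + l ≤ k) : HighIdx k :=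
  ⟨⟨(⟨m, by omega⟩, ⟨l, by omega⟩), by constructor <;> simp only <;> omega⟩, hl⟩

@[simp] theorem e₁_ofExponents (m l : ℕ) (hl : 1 ≤ l) (h : m + l ≤ k) :
    (ofExponents m l hl h).e₁ = m := rfl

@[simp] theorem e₂_ofExponents (m l : ℕ) (hl : 1 ≤ l) (h : m + l ≤ k) :
    (ofExponents m l hl h).e₂ = l := rfl

/-- The node `k - e₁` attached to a multi-index: exactly `e₁` of the nodes `0, …, k` follow it,
and they are the zeros of the Newton polynomial of degree `e₁`. -/
def node (β : HighIdx k) : Fin (k + 1) := ⟨k - β.e₁, by omega⟩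

theorem val_node (β : HighIdx k) : (β.node : ℕ) = k - β.e₁ := rfl

variable (k) in
/-- The multi-indices of maximal degree with `e₂ ≥ 2`. Their nodes are the nodes other than
`0` and `1`. -/
def top : Finset (HighIdx k) := {β | β.e₁ + β.e₂ = k ∧ 2 ≤ β.e₂}

theorem mem_top {β : HighIdx k} : β ∈ top k ↔ β.e₁ + β.e₂ = k ∧ 2 ≤ β.e₂ := by
  simp [top]

theorem val_node_of_mem_top {β : HighIdx k} (hβ : β ∈ top k) : (β.node : ℕ) = β.e₂ := by
  have := mem_top.1 hβ
  rw [val_node]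
  omega

theorem zero_lt_one_lt_node_of_mem_top {β : HighIdx k} (hβ : β ∈ top k) :
    (0 : Fin (k + 1)) < 1 ∧ 1 < β.node := by
  have := mem_top.1 hβ
  obtain ⟨n, rfl⟩ : ∃ n, k = n + 2 := ⟨k - 2, by omega⟩
  refine ⟨by simp, ?_⟩
  rw [Fin.lt_def, val_node_of_mem_top hβ, Fin.val_one]
  omega

theorem prod_top_node (f : Fin (k + 1) → ℝ) :
    ∏ β ∈ top k, f β.node = ∏ i : Fin (k + 1) with 2 ≤ i.val, f i := by
  refine Finset.prod_bij (fun β _ => β.node) (fun β hβ => ?_) (fun β hβ γ hγ h => ?_)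
    (fun i hi => ?_) fun _ _ => rfl
  · simpa [val_node_of_mem_top hβ] using (mem_top.1 hβ).2
  · have h₂ : β.e₂ = γ.e₂ := by rw [← val_node_of_mem_top hβ, ← val_node_of_mem_top hγ, h]
    have := mem_top.1 hβ
    have := mem_top.1 hγ
    exact ext_exponents (by omega) h₂
  · have hi2 : 2 ≤ (i : ℕ) := (Finset.mem_filter.1 hi).2
    have := i.2
    have htop : ofExponents (k - i) i (by omega) (by omega) ∈ top k := by
      simp only [mem_top, e₁_ofExponents, e₂_ofExponents]
      omega
    exact ⟨_, htop, Fin.ext (val_node_of_mem_top htop)⟩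

end HighIdx

section NewtonBasis

open Polynomial HighIdx

variable {k : ℕ}

/-- The coefficient vector of the `j`-th Taylor coefficient in `t` of the phase at `(s, t)`,
as a linear form in the coefficients of the monomials involving `t`. -/
def levelRow (s t : ℝ) (j : ℕ) (β : HighIdx k) : ℝ := s ^ β.e₁ * (β.e₂.choose j * t ^ (β.e₂ - j))

/-- The `j`-th Taylor coefficient in `t` of the phase at `(s, t)`, for `j ≥ 1`. -/
def levelDeriv (k : ℕ) (x : HighIdx k → ℝ) (j : ℕ) (s t : ℝ) : ℝ :=
  ∑ β, levelRow s t j β * x β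

/-- The Newton polynomial of degree `e₁`, with zeros at the nodes after `β.node`. -/
def newtonPoly (s : Fin (k + 1) → ℝ) (β : HighIdx k) : ℝ[X] :=
  ∏ i ∈ Finset.Ioi β.node, (X - C (s i))

theorem monic_newtonPoly (s : Fin (k + 1) → ℝ) (β : HighIdx k) : (newtonPoly s β).Monic :=
  monic_prod_X_sub_C _ _

theorem natDegree_newtonPoly (s : Fin (k + 1) → ℝ) (β : HighIdx k) :
    (newtonPoly s β).natDegree = β.e₁ := by
  have := β.e₁_add_e₂_le
  rw [newtonPoly, natDegree_finsetProd_X_sub_C_eq_card, Fin.card_Ioi, val_node]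
  omega

theorem eval_newtonPoly (s : Fin (k + 1) → ℝ) (β : HighIdx k) (u : ℝ) :
    (newtonPoly s β).eval u = ∏ i ∈ Finset.Ioi β.node, (u - s i) := by
  simp [newtonPoly, eval_prod]

theorem eval_newtonPoly_eq_zero (s : Fin (k + 1) → ℝ) (β : HighIdx k) {i : Fin (k + 1)}
    (hi : β.node < i) : (newtonPoly s β).eval (s i) = 0 := by
  rw [eval_newtonPoly]
  exact Finset.prod_eq_zero (Finset.mem_Ioi.2 hi) (sub_self _)

/-- The change of basis from `newtonPoly s γ * t ^ γ.e₂` to the monomials. -/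
def newtonMatrix (s : Fin (k + 1) → ℝ) : Matrix (HighIdx k) (HighIdx k) ℝ :=
  fun β γ => if β.e₂ = γ.e₂ then (newtonPoly s γ).coeff β.e₁ else 0

theorem det_newtonMatrix (s : Fin (k + 1) → ℝ) : (newtonMatrix s).det = 1 := by
  have htri : (newtonMatrix s).BlockTriangular fun β => toLex (β.e₁, β.e₂) := by
    intro β γ h
    rw [newtonMatrix]
    split_ifs with he₂
    · refine coeff_eq_zero_of_natDegree_lt ?_
      rw [natDegree_newtonPoly]
      simpa [Prod.Lex.toLex_lt_toLex, he₂] using h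
    · rfl
  rw [det_eq_prod_diag_of_blockTriangular_injective htri fun β γ h => by
    obtain ⟨h₁, h₂⟩ := Prod.ext_iff.1 (toLex.injective h)
    exact ext_exponents h₁ h₂]
  refine Finset.prod_eq_one fun β _ => ?_
  rw [newtonMatrix, if_pos rfl, ← natDegree_newtonPoly s β]
  exact monic_newtonPoly s β

theorem sum_levelRow_mul_newtonMatrix (s : Fin (k + 1) → ℝ) (u v : ℝ) (j : ℕ) (γ : HighIdx k) :
    ∑ β, levelRow u v j β * newtonMatrix s β γ
      = (newtonPoly s γ).eval u * (γ.e₂.choose j * v ^ (γ.e₂ - j)) := by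
  have hγ := γ.e₁_add_e₂_le
  have hdeg : (newtonPoly s γ).natDegree < k - γ.e₂ + 1 := by
    rw [natDegree_newtonPoly]
    omega
  have hterm : ∀ β : HighIdx k, levelRow u v j β * newtonMatrix s β γ
      = if β.e₂ = γ.e₂ then (newtonPoly s γ).coeff β.e₁ * u ^ β.e₁ *
        (γ.e₂.choose j * v ^ (γ.e₂ - j)) else 0 := by
    intro β
    rw [newtonMatrix, levelRow]
    split_ifs with h
    · rw [h]
      ring
    · ring
  simp_rw [eval_eq_sum_range' hdeg, Finset.sum_mul, hterm]
  rw [← Finset.sum_filter]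
  refine Finset.sum_bij (fun β _ => β.e₁) (fun β hβ => ?_) (fun β hβ β' hβ' h => ?_)
    (fun m hm => ?_) fun _ _ => rfl
  · have := β.e₁_add_e₂_le
    rw [Finset.mem_filter] at hβ
    rw [Finset.mem_range]
    omega
  · rw [Finset.mem_filter] at hβ hβ'
    exact ext_exponents h (hβ.2.trans hβ'.2.symm)
  · rw [Finset.mem_range] at hm
    exact ⟨ofExponents m γ.e₂ γ.one_le_e₂ (by omega), by simp, rfl⟩

end NewtonBasis

section ConstraintVolume

open Polynomial HighIdx

variable {k : ℕ}

/-- The nodes at which the top degree divided difference attached to `β` is taken. -/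
def dividedNodes (β : HighIdx k) : Finset (Fin (k + 1)) := {0, 1, β.node} ∪ Finset.Ioi β.node

theorem disjoint_Ioi_node {β : HighIdx k} (hβ : β ∈ top k) :
    Disjoint {0, 1, β.node} (Finset.Ioi β.node) := by
  obtain ⟨-, h1n⟩ := zero_lt_one_lt_node_of_mem_top hβ
  simp [h1n.le]

theorem card_dividedNodes {β : HighIdx k} (hβ : β ∈ top k) :
    (dividedNodes β).card = k + 3 - β.e₂ := by
  obtain ⟨h01, h1n⟩ := zero_lt_one_lt_node_of_mem_top hβ
  have := mem_top.1 hβ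
  rw [dividedNodes, Finset.card_union_of_disjoint (disjoint_Ioi_node hβ),
    Finset.card_eq_three.2 ⟨_, _, _, h01.ne, (h01.trans h1n).ne, h1n.ne, rfl⟩, Fin.card_Ioi,
    val_node_of_mem_top hβ]
  omega

theorem card_dividedNodes_le (β : HighIdx k) : (dividedNodes β).card ≤ k + 1 :=
  (Finset.card_le_univ _).trans (Fintype.card_fin _).le

/-- The deviation of `t i` from the affine function of `s i` that interpolates the first two
nodes. -/
def affineDefect (s t : Fin (k + 1) → ℝ) (i : Fin (k + 1)) : ℝ :=
  t i - (t 0 + (t 1 - t 0) / (s 1 - s 0) * (s i - s 0))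

theorem dividedDiff_newtonPoly_mul {s : Fin (k + 1) → ℝ} (hs : Function.Injective s)
    (t : Fin (k + 1) → ℝ) {β : HighIdx k} (hβ : β ∈ top k) :
    dividedDiff (dividedNodes β) s (fun i => (newtonPoly s β).eval (s i) * t i)
      = affineDefect s t β.node / ((s β.node - s 0) * (s β.node - s 1)) := by
  obtain ⟨h01, h1n⟩ := zero_lt_one_lt_node_of_mem_top hβ
  simp_rw [eval_newtonPoly]
  rw [dividedNodes, dividedDiff_union_prod_sub_mul hs (disjoint_Ioi_node hβ),
    dividedDiff_triple hs h01.ne (h01.trans h1n).ne h1n.ne, affineDefect]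

/-- A square subsystem of the constraints on the coefficients: one row for each multi-index `β`,
which is the Taylor coefficient of order `e₂` at the node of `β`, or, for `β ∈ S`, a divided
difference of the Taylor coefficients of order `e₂ - 1`. -/
def constraintMatrix (s t : Fin (k + 1) → ℝ) (S : Finset (HighIdx k)) :
    Matrix (HighIdx k) (HighIdx k) ℝ := fun β δ =>
  if β ∈ S then dividedDiff (dividedNodes β) s fun i => levelRow (s i) (t i) (β.e₂ - 1) δ
  else levelRow (s β.node) (t β.node) β.e₂ δ

theorem constraintMatrix_mul_newtonMatrix (s t : Fin (k + 1) → ℝ) (S : Finset (HighIdx k))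
    (β γ : HighIdx k) :
    (constraintMatrix s t S * newtonMatrix s) β γ =
      if β ∈ S then dividedDiff (dividedNodes β) s fun i =>
        (newtonPoly s γ).eval (s i) * (γ.e₂.choose (β.e₂ - 1) * t i ^ (γ.e₂ - (β.e₂ - 1)))
      else (newtonPoly s γ).eval (s β.node) *
        (γ.e₂.choose β.e₂ * t β.node ^ (γ.e₂ - β.e₂)) := by
  rw [Matrix.mul_apply]
  split_ifs with h
  · simp_rw [constraintMatrix, if_pos h, ← dividedDiff_sum_mul, sum_levelRow_mul_newtonMatrix]
  · simp_rw [constraintMatrix, if_neg h, sum_levelRow_mul_newtonMatrix]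

theorem blockTriangular_constraintMatrix_mul_newtonMatrix {s : Fin (k + 1) → ℝ}
    (hs : Function.Injective s) (t : Fin (k + 1) → ℝ) {S : Finset (HighIdx k)} (hS : S ⊆ top k) :
    (constraintMatrix s t S * newtonMatrix s).BlockTriangular
      fun β => toLex (β.e₂, β.node) := by
  intro β γ h
  rw [Prod.Lex.toLex_lt_toLex] at h
  rw [constraintMatrix_mul_newtonMatrix]
  split_ifs with hβ
  · have hβ' := mem_top.1 (hS hβ)
    have hγ := γ.e₁_add_e₂_le
    have hlt : γ.e₂ < β.e₂ := by
      refine h.resolve_right fun ⟨he, hn⟩ => ?_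
      rw [Fin.lt_def, val_node, val_node] at hn
      dsimp only at he
      omega
    rcases (Nat.le_sub_one_of_lt hlt).lt_or_eq with hlt' | heq
    · simp [Nat.choose_eq_zero_of_lt hlt', dividedDiff]
    · simp only [heq, Nat.choose_self, Nat.sub_self, pow_zero, Nat.cast_one, mul_one]
      refine dividedDiff_eval_eq_zero hs _ ?_
      rw [natDegree_newtonPoly, card_dividedNodes (hS hβ)]
      omega
  · rcases h with hlt | ⟨-, hn⟩
    · simp [Nat.choose_eq_zero_of_lt hlt]
    · rw [eval_newtonPoly_eq_zero s γ hn, zero_mul]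

/-- The diagonal entries of the triangular form of `constraintMatrix s t S`. -/
def pivot (s t : Fin (k + 1) → ℝ) (S : Finset (HighIdx k)) (β : HighIdx k) : ℝ :=
  if β ∈ S then β.e₂ * (affineDefect s t β.node / ((s β.node - s 0) * (s β.node - s 1)))
  else (newtonPoly s β).eval (s β.node)

theorem constraintMatrix_mul_newtonMatrix_self {s : Fin (k + 1) → ℝ}
    (hs : Function.Injective s) (t : Fin (k + 1) → ℝ) {S : Finset (HighIdx k)} (hS : S ⊆ top k)
    (β : HighIdx k) : (constraintMatrix s t S * newtonMatrix s) β β = pivot s t S β := by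
  rw [constraintMatrix_mul_newtonMatrix, pivot]
  split_ifs with hβ
  · have hchoose : β.e₂.choose (β.e₂ - 1) = β.e₂ := by
      rw [Nat.choose_symm β.one_le_e₂, Nat.choose_one_right]
    have hsub : β.e₂ - (β.e₂ - 1) = 1 := Nat.sub_sub_self β.one_le_e₂
    rw [← dividedDiff_newtonPoly_mul hs t (hS hβ), hchoose, hsub, dividedDiff, dividedDiff,
      Finset.mul_sum]
    exact Finset.sum_congr rfl fun i _ => by ring
  · simp

theorem det_constraintMatrix {s : Fin (k + 1) → ℝ} (hs : Function.Injective s)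
    (t : Fin (k + 1) → ℝ) {S : Finset (HighIdx k)} (hS : S ⊆ top k) :
    (constraintMatrix s t S).det = ∏ β, pivot s t S β := by
  rw [← mul_one (constraintMatrix s t S).det, ← det_newtonMatrix s, ← Matrix.det_mul,
    det_eq_prod_diag_of_blockTriangular_injective
      (blockTriangular_constraintMatrix_mul_newtonMatrix hs t hS) fun β γ h => ?_]
  · exact Finset.prod_congr rfl fun β _ => constraintMatrix_mul_newtonMatrix_self hs t hS β
  · obtain ⟨h₂, hn⟩ := Prod.ext_iff.1 (toLex.injective h)
    have := β.e₁_add_e₂_le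
    have := γ.e₁_add_e₂_le
    rw [Fin.ext_iff, val_node, val_node] at hn
    exact ext_exponents (by omega) h₂

theorem abs_constraintMatrix_mulVec_le {s t : Fin (k + 1) → ℝ} {g K a : ℝ} (hg : 0 < g)
    (hg1 : g ≤ 1) (hs : Pairwise fun i j => g ≤ |s i - s j|) (hK : 0 ≤ K) (ha : 0 < a)
    {S : Finset (HighIdx k)} (hS : S ⊆ top k) {x : HighIdx k → ℝ}
    (hx : ∀ i j, 1 ≤ j → j ≤ k → |levelDeriv k x j (s i) (t i)| ≤ K / a ^ j) (β : HighIdx k) :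
    |(constraintMatrix s t S).mulVec x β| ≤
      if β ∈ S then (k + 1) * g⁻¹ ^ (k + 1) * (K / a ^ (β.e₂ - 1)) else K / a ^ β.e₂ := by
  have hβ := β.e₁_add_e₂_le
  rw [Matrix.mulVec, dotProduct]
  split_ifs with h
  · have h2 := (mem_top.1 (hS h)).2
    simp_rw [constraintMatrix, if_pos h, ← dividedDiff_sum_mul]
    exact_mod_cast abs_dividedDiff_le hg hg1 (card_dividedNodes_le β) hs (by positivity)
      fun i _ => hx i (β.e₂ - 1) (by omega) (by omega)
  · simp_rw [constraintMatrix, if_neg h]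
    exact hx _ _ β.one_le_e₂ (by omega)

theorem abs_affineDefect_le_abs_pivot {s t : Fin (k + 1) → ℝ} (hs : Function.Injective s)
    (hs01 : ∀ i, s i ∈ Icc (0 : ℝ) 1) {S : Finset (HighIdx k)} (hS : S ⊆ top k) {β : HighIdx k}
    (hβ : β ∈ S) : |affineDefect s t β.node| ≤ |pivot s t S β| := by
  obtain ⟨h01, h1n⟩ := zero_lt_one_lt_node_of_mem_top (hS hβ)
  have hsub : ∀ i j, |s i - s j| ≤ 1 := fun i j => by
    simpa using abs_sub_le_of_le_of_le (hs01 i).1 (hs01 i).2 (hs01 j).1 (hs01 j).2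
  have hprod : 0 < |(s β.node - s 0) * (s β.node - s 1)| :=
    abs_pos.2 (mul_ne_zero (sub_ne_zero.2 (hs.ne (h01.trans h1n).ne'))
      (sub_ne_zero.2 (hs.ne h1n.ne')))
  have hprod1 : |(s β.node - s 0) * (s β.node - s 1)| ≤ 1 := by
    rw [abs_mul]
    exact mul_le_one₀ (hsub _ _) (abs_nonneg _) (hsub _ _)
  have he₂ : (1 : ℝ) ≤ β.e₂ := by exact_mod_cast β.one_le_e₂
  rw [pivot, if_pos hβ, abs_mul, abs_div, Nat.abs_cast]
  exact (le_div_self (abs_nonneg _) hprod hprod1).trans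
    (le_mul_of_one_le_left (by positivity) he₂)

theorem pow_le_abs_pivot {s t : Fin (k + 1) → ℝ} {g : ℝ} (hg : 0 < g) (hg1 : g ≤ 1)
    (hs : Pairwise fun i j => g ≤ |s i - s j|) {S : Finset (HighIdx k)} {β : HighIdx k}
    (hβ : β ∉ S) : g ^ (k + 1) ≤ |pivot s t S β| := by
  rw [pivot, if_neg hβ, eval_newtonPoly]
  exact pow_le_abs_prod hg hg1 ((Finset.card_le_univ _).trans (Fintype.card_fin _).le)
    fun i hi => hs (Finset.mem_Ioi.1 hi).ne

/-- The multi-indices of top degree for which a divided difference gives a better constraint than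
a Taylor coefficient at a single node. -/
def defectiveTop (s t : Fin (k + 1) → ℝ) (a : ℝ) : Finset (HighIdx k) :=
  {β ∈ top k | a < |affineDefect s t β.node|}

theorem defectiveTop_subset_top (s t : Fin (k + 1) → ℝ) (a : ℝ) :
    defectiveTop s t a ⊆ top k := Finset.filter_subset _ _

theorem defectiveTop_bound_le {s t : Fin (k + 1) → ℝ} (hs : Function.Injective s)
    (hs01 : ∀ i, s i ∈ Icc (0 : ℝ) 1) {C K a : ℝ} (hC : 0 ≤ C) (hK : 0 ≤ K) (ha : 0 < a)
    {β : HighIdx k} (hβ : β ∈ defectiveTop s t a) :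
    pivot s t (defectiveTop s t a) β ≠ 0 ∧
      2 * (C * (K / a ^ (β.e₂ - 1))) * |pivot s t (defectiveTop s t a) β|⁻¹
        ≤ 2 * (C * K) * (a ^ β.e₂)⁻¹ * (a / max a |affineDefect s t β.node|) := by
  have ha' : a < |affineDefect s t β.node| := (Finset.mem_filter.1 hβ).2
  have hle := abs_affineDefect_le_abs_pivot (t := t) hs hs01 (defectiveTop_subset_top s t a) hβ
  have hpow : a ^ β.e₂ = a ^ (β.e₂ - 1) * a :=
    (pow_sub_one_mul (Nat.one_le_iff_ne_zero.1 β.one_le_e₂) a).symm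
  refine ⟨abs_pos.1 (ha.trans (ha'.trans_le hle)), ?_⟩
  calc _ ≤ 2 * (C * (K / a ^ (β.e₂ - 1))) * |affineDefect s t β.node|⁻¹ := by
        gcongr
        exact ha.trans ha'
    _ = _ := by
        rw [max_eq_right ha'.le, hpow]
        field_simp

theorem node_bound_le {s t : Fin (k + 1) → ℝ} {g K a : ℝ} (hg : 0 < g) (hg1 : g ≤ 1)
    (hs : Pairwise fun i j => g ≤ |s i - s j|) (hK : 0 ≤ K) (ha : 0 < a)
    {S : Finset (HighIdx k)} {β : HighIdx k} (hβ : β ∉ S) :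
    pivot s t S β ≠ 0 ∧ 2 * (K / a ^ β.e₂) * |pivot s t S β|⁻¹
      ≤ 2 * ((k + 1) * g⁻¹ ^ (k + 1) * K) * (a ^ β.e₂)⁻¹ := by
  have hgpow : 0 < g ^ (k + 1) := pow_pos hg _
  have hle := pow_le_abs_pivot (t := t) hg hg1 hs hβ
  refine ⟨abs_pos.1 (hgpow.trans_le hle), ?_⟩
  calc 2 * (K / a ^ β.e₂) * |pivot s t S β|⁻¹ ≤ 2 * (K / a ^ β.e₂) * (g ^ (k + 1))⁻¹ := by
        gcongr
    _ ≤ (k + 1) * (2 * (K / a ^ β.e₂) * (g ^ (k + 1))⁻¹) :=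
        le_mul_of_one_le_left (by positivity) (le_add_of_nonneg_left k.cast_nonneg)
    _ = _ := by
        rw [inv_pow, div_eq_mul_inv]
        ring

theorem two_mul_bound_mul_abs_inv_pivot_le {s t : Fin (k + 1) → ℝ} {g K a : ℝ} (hg : 0 < g)
    (hg1 : g ≤ 1) (hs01 : ∀ i, s i ∈ Icc (0 : ℝ) 1) (hs : Pairwise fun i j => g ≤ |s i - s j|)
    (hK : 0 ≤ K) (ha : 0 < a) (β : HighIdx k) :
    pivot s t (defectiveTop s t a) β ≠ 0 ∧
    2 * (if β ∈ defectiveTop s t a then (k + 1) * g⁻¹ ^ (k + 1) * (K / a ^ (β.e₂ - 1))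
        else K / a ^ β.e₂) * |pivot s t (defectiveTop s t a) β|⁻¹
      ≤ 2 * ((k + 1) * g⁻¹ ^ (k + 1) * K) * (a ^ β.e₂)⁻¹ *
        (if β ∈ top k then a / max a |affineDefect s t β.node| else 1) := by
  by_cases hβ : β ∈ defectiveTop s t a
  · rw [if_pos hβ, if_pos (defectiveTop_subset_top s t a hβ)]
    exact defectiveTop_bound_le (injective_of_pairwise_le_abs_sub hg hs) hs01 (by positivity) hK
      ha hβ
  · have hone : (if β ∈ top k then a / max a |affineDefect s t β.node| else 1) = 1 := by
      split_ifs with htop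
      · have hle : |affineDefect s t β.node| ≤ a :=
          not_lt.1 fun h => hβ (Finset.mem_filter.2 ⟨htop, h⟩)
        rw [max_eq_left hle, div_self ha.ne']
      · rfl
    rw [if_neg hβ, hone, mul_one]
    exact node_bound_le hg hg1 hs hK ha hβ

theorem volume_levelDeriv_le {s t : Fin (k + 1) → ℝ} {g K a : ℝ} (hg : 0 < g) (hg1 : g ≤ 1)
    (hs01 : ∀ i, s i ∈ Icc (0 : ℝ) 1) (hs : Pairwise fun i j => g ≤ |s i - s j|) (hK : 0 ≤ K)
    (ha : 0 < a) :
    volume {x : HighIdx k → ℝ | ∀ i j, 1 ≤ j → j ≤ k →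
        |levelDeriv k x j (s i) (t i)| ≤ K / a ^ j}
      ≤ ENNReal.ofReal ((2 * ((k + 1) * g⁻¹ ^ (k + 1) * K)) ^ Fintype.card (HighIdx k) *
          (∏ β : HighIdx k, (a ^ β.e₂)⁻¹) *
          ∏ i : Fin (k + 1) with 2 ≤ i.val, a / max a |affineDefect s t i|) := by
  have hS := defectiveTop_subset_top s t a
  have hpivot := two_mul_bound_mul_abs_inv_pivot_le (t := t) hg hg1 hs01 hs hK ha
  calc _ ≤ volume {x : HighIdx k → ℝ | ∀ β,
          |(constraintMatrix s t (defectiveTop s t a)).mulVec x β| ≤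
            if β ∈ defectiveTop s t a then (k + 1) * g⁻¹ ^ (k + 1) * (K / a ^ (β.e₂ - 1))
            else K / a ^ β.e₂} :=
        measure_mono fun x hx β => abs_constraintMatrix_mulVec_le hg hg1 hs hK ha hS hx β
    _ ≤ _ := volume_forall_abs_mulVec_le_le_prod
        (det_constraintMatrix (injective_of_pairwise_le_abs_sub hg hs) t hS)
        (fun β => (hpivot β).1) fun β => (hpivot β).2
    _ = _ := by
        rw [← ENNReal.ofReal_prod_of_nonneg fun β _ => by split_ifs <;> positivity,
          Finset.prod_mul_distrib, Finset.prod_mul_distrib, Finset.prod_const, Finset.card_univ,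
          Finset.prod_ite_mem, Finset.univ_inter,
          prod_top_node fun i => a / max a |affineDefect s t i|]

end ConstraintVolume

section Counting

theorem sum_range_mul_sub (K : ℝ) (n : ℕ) :
    ∑ i ∈ Finset.range n, (i : ℝ) * (K - i)
      = K * (n * (n - 1) / 2) - n * (n - 1) * (2 * n - 1) / 6 := by
  induction n with
  | zero => simp
  | succ n ih =>
    rw [Finset.sum_range_succ, ih]
    push_cast
    ring

theorem sum_range_ite_one_le_add_le (k : ℕ) :
    ∑ i ∈ Finset.range (k + 1), ∑ j ∈ Finset.range (k + 1),
      (if 1 ≤ i + j ∧ i + j ≤ k then (i : ℝ) else 0) = (k : ℝ) * (k + 1) * (k + 2) / 6 := by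
  have hinner : ∀ i ∈ Finset.range (k + 1), ∑ j ∈ Finset.range (k + 1),
      (if 1 ≤ i + j ∧ i + j ≤ k then (i : ℝ) else 0) = (i : ℝ) * ((k + 1 : ℝ) - i) := by
    intro i hi
    rcases Nat.eq_zero_or_pos i with rfl | hi0
    · simp
    have hfilter : {j ∈ Finset.range (k + 1) | 1 ≤ i + j ∧ i + j ≤ k}
        = Finset.range (k + 1 - i) := by
      ext j
      simp only [Finset.mem_filter, Finset.mem_range]
      omega
    rw [← Finset.sum_filter, hfilter, Finset.sum_const, Finset.card_range, nsmul_eq_mul,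
      Nat.cast_sub (Finset.mem_range.1 hi).le, Nat.cast_add_one, mul_comm]
  rw [Finset.sum_congr rfl hinner, sum_range_mul_sub]
  push_cast
  ring

theorem Idx.sum_eq_sum_range (k : ℕ) (f : ℕ → ℕ → ℝ) :
    ∑ β : Idx k, f β.1.1 β.1.2 = ∑ i ∈ Finset.range (k + 1), ∑ j ∈ Finset.range (k + 1),
      (if 1 ≤ i + j ∧ i + j ≤ k then f i j else 0) := by
  rw [Finset.sum_range]
  simp_rw [Finset.sum_range]
  rw [← Fintype.sum_prod_type' (f := fun (i j : Fin (k + 1)) =>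
    if 1 ≤ (i : ℕ) + j ∧ (i : ℕ) + j ≤ k then f i j else 0), ← Finset.sum_filter]
  exact (Finset.sum_subtype _ (by simp)
    fun β : Fin (k + 1) × Fin (k + 1) => f β.1 β.2).symm

theorem Idx.sum_fst (k : ℕ) :
    ∑ β : Idx k, ((β.1.1 : ℕ) : ℝ) = (k : ℝ) * (k + 1) * (k + 2) / 6 :=
  (Idx.sum_eq_sum_range k fun i _ => (i : ℝ)).trans (sum_range_ite_one_le_add_le k)

theorem Idx.sum_snd (k : ℕ) :
    ∑ β : Idx k, ((β.1.2 : ℕ) : ℝ) = (k : ℝ) * (k + 1) * (k + 2) / 6 := by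
  rw [Idx.sum_eq_sum_range k fun _ j => (j : ℝ), Finset.sum_comm, ← sum_range_ite_one_le_add_le k]
  simp_rw [add_comm]

theorem HighIdx.sum_e₂ (k : ℕ) :
    ∑ β : HighIdx k, (β.e₂ : ℝ) = (k : ℝ) * (k + 1) * (k + 2) / 6 := by
  rw [← Idx.sum_snd, ← Finset.sum_filter_of_ne (s := Finset.univ)
    (p := fun β : Idx k => 1 ≤ (β.1.2 : ℕ))]
  · exact (Finset.sum_subtype (p := fun β : Idx k => 1 ≤ (β.1.2 : ℕ)) _ (by simp)
      fun β : Idx k => ((β.1.2 : ℕ) : ℝ)).symm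
  · exact fun β _ hβ => Nat.one_le_iff_ne_zero.2 fun h => hβ (by rw [h, Nat.cast_zero])

end Counting

section ProductMeasures

variable {α : Type*} [MeasurableSpace α] {n : ℕ}

theorem lintegral_pi_fin_succ (μ : Fin (n + 1) → Measure α) [∀ i, SigmaFinite (μ i)]
    {f : (Fin (n + 1) → α) → ℝ≥0∞} (hf : Measurable f) :
    ∫⁻ x, f x ∂(Measure.pi μ)
      = ∫⁻ y, ∫⁻ z, f (Fin.cons y z) ∂(Measure.pi fun i => μ (Fin.succ i)) ∂(μ 0) := by
  have hm : Measurable fun z => f ((MeasurableEquiv.piFinSuccAbove (fun _ => α) 0).symm z) :=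
    hf.comp (MeasurableEquiv.measurable _)
  rw [← ((measurePreserving_piFinSuccAbove μ 0).symm).lintegral_comp_emb
    (MeasurableEquiv.measurableEmbedding _), lintegral_prod _ hm.aemeasurable]
  simp_rw [MeasurableEquiv.piFinSuccAbove_symm_apply, Fin.insertNthEquiv, Equiv.coe_fn_mk,
    Fin.insertNth_zero', Fin.zero_succAbove]

theorem lintegral_fin_prod_eq_prod (μ : Fin n → Measure α) [∀ i, SigmaFinite (μ i)]
    {f : Fin n → α → ℝ≥0∞} (hf : ∀ i, Measurable (f i)) :
    ∫⁻ x : Fin n → α, ∏ i, f i (x i) ∂(Measure.pi μ) = ∏ i, ∫⁻ x, f i x ∂(μ i) := by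
  induction n with
  | zero => simp
  | succ n ih =>
    have hm : Measurable fun x : Fin (n + 1) → α => ∏ i, f i (x i) :=
      Finset.measurable_prod _ fun i _ => (hf i).comp (measurable_pi_apply i)
    rw [lintegral_pi_fin_succ μ hm, Fin.prod_univ_succ]
    simp_rw [Fin.prod_univ_succ, Fin.cons_zero, Fin.cons_succ]
    rw [← ih _ fun i => hf i.succ, ← lintegral_mul_const _ (hf 0)]
    exact lintegral_congr fun y => lintegral_const_mul _
      (Finset.measurable_prod _ fun i _ => (hf i.succ).comp (measurable_pi_apply i))

end ProductMeasures

section DefectIntegral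

theorem integrableOn_abs_rpow_Icc {r : ℝ} (hr : -1 < r) :
    IntegrableOn (fun v : ℝ => |v| ^ r) (Icc (-1) 1) := by
  have hpos : IntegrableOn (fun v : ℝ => |v| ^ r) (Icc 0 1) := by
    have h := intervalIntegral.intervalIntegrable_rpow' (a := 0) (b := 1) hr
    rw [intervalIntegrable_iff_integrableOn_Icc_of_le zero_le_one] at h
    exact h.congr_fun (fun v hv => by simp only [abs_of_nonneg hv.1]) measurableSet_Icc
  have hneg : IntegrableOn (fun v : ℝ => |v| ^ r) (Icc (-1) 0) := by simpa using hpos.comp_neg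
  rw [← Icc_union_Icc_eq_Icc neg_one_lt_zero.le zero_le_one]
  exact hneg.union hpos

theorem div_max_abs_le {a δ v : ℝ} (ha : 0 < a) (hδ : 0 ≤ δ) (hδ1 : δ ≤ 1) (hv : v ≠ 0) :
    a / max a |v| ≤ a ^ (1 - δ) * |v| ^ (δ - 1) := by
  have hmax : 0 < max a |v| := lt_max_of_lt_left ha
  calc a / max a |v| ≤ (a / max a |v|) ^ (1 - δ) := by
        conv_lhs => rw [← rpow_one (a / max a |v|)]
        exact rpow_le_rpow_of_exponent_ge (by positivity) ((div_le_one hmax).2 (le_max_left _ _))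
          (by linarith)
    _ = a ^ (1 - δ) * max a |v| ^ (δ - 1) := by
        rw [div_rpow ha.le hmax.le, div_eq_mul_inv, ← rpow_neg hmax.le, neg_sub]
    _ ≤ a ^ (1 - δ) * |v| ^ (δ - 1) :=
        mul_le_mul_of_nonneg_left (rpow_le_rpow_of_nonpos (abs_pos.2 hv) (le_max_right _ _)
          (sub_nonpos.2 hδ1)) (by positivity)

theorem exists_lintegral_div_max_abs_sub_le {δ : ℝ} (hδ : 0 < δ) (hδ1 : δ ≤ 1) :
    ∃ C : ℝ, 0 ≤ C ∧ ∀ a : ℝ, 0 < a → ∀ c : ℝ,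
      ∫⁻ t in Icc (0 : ℝ) 1, ENNReal.ofReal (a / max a |t - c|)
        ≤ ENNReal.ofReal (C * a ^ (1 - δ)) := by
  set w : ℝ → ℝ≥0∞ := (Icc (-1 : ℝ) 1).indicator fun v => ENNReal.ofReal (|v| ^ (δ - 1)) with hw
  have hwfin : ∫⁻ v, w v < ⊤ := by
    rw [hw, lintegral_indicator measurableSet_Icc, ← hasFiniteIntegral_iff_ofReal
      (Filter.Eventually.of_forall fun v => by positivity)]
    exact (integrableOn_abs_rpow_Icc (by linarith)).hasFiniteIntegral
  refine ⟨(∫⁻ v, w v).toReal + 1, by positivity, fun a ha c => ?_⟩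
  have hpt : ∀ v : ℝ, v ≠ 0 →
      ENNReal.ofReal (a / max a |v|) ≤ ENNReal.ofReal (a ^ (1 - δ)) * (w v + 1) := by
    intro v hv
    have hle := div_max_abs_le ha hδ.le hδ1 hv
    by_cases h : v ∈ Icc (-1 : ℝ) 1
    · refine le_trans ?_ (mul_le_mul_right le_self_add _)
      rw [hw, indicator_of_mem h, ← ENNReal.ofReal_mul (by positivity)]
      exact ENNReal.ofReal_le_ofReal hle
    · rw [mem_Icc, ← abs_le, not_le] at h
      refine le_trans (ENNReal.ofReal_le_ofReal (hle.trans (mul_le_of_le_one_right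
        (by positivity) (rpow_le_one_of_one_le_of_nonpos h.le (by linarith))))) ?_
      exact le_mul_of_one_le_right zero_le le_add_self
  calc ∫⁻ t in Icc (0 : ℝ) 1, ENNReal.ofReal (a / max a |t - c|)
      ≤ ∫⁻ t in Icc (0 : ℝ) 1, ENNReal.ofReal (a ^ (1 - δ)) * (w (t - c) + 1) :=
        lintegral_mono_ae (ae_restrict_of_ae
          ((Measure.ae_ne volume c).mono fun t ht => hpt _ (sub_ne_zero.2 ht)))
    _ ≤ ENNReal.ofReal (a ^ (1 - δ)) * ((∫⁻ t, w (t - c)) + 1) := by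
        rw [lintegral_const_mul' _ _ ENNReal.ofReal_ne_top, lintegral_add_right _ measurable_const,
          setLIntegral_one, Real.volume_Icc, sub_zero, ENNReal.ofReal_one]
        gcongr
        exact Measure.restrict_le_self
    _ = _ := by
        rw [lintegral_sub_right_eq_self, mul_comm, ENNReal.ofReal_mul (by positivity),
          ENNReal.ofReal_add ENNReal.toReal_nonneg zero_le_one, ENNReal.ofReal_toReal hwfin.ne,
          ENNReal.ofReal_one]

theorem prod_fin_two_le {M : Type*} [CommMonoid M] {n : ℕ} (g : Fin (n + 2) → M) :
    ∏ i : Fin (n + 2) with 2 ≤ i.val, g i = ∏ i : Fin n, g i.succ.succ := by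
  rw [Finset.prod_filter, Fin.prod_univ_succ, Fin.prod_univ_succ]
  simp

theorem measurable_prod_div_max_affineDefect {k : ℕ} (a : ℝ) (s : Fin (k + 1) → ℝ) :
    Measurable fun t : Fin (k + 1) → ℝ =>
      ENNReal.ofReal (∏ i : Fin (k + 1) with 2 ≤ i.val, a / max a |affineDefect s t i|) := by
  unfold affineDefect
  fun_prop

theorem lintegral_prod_div_max_affineDefect_cons_le {n : ℕ} {a B : ℝ} (ha : 0 < a) (hB : 0 ≤ B)
    (h : ∀ c : ℝ, ∫⁻ t in Icc (0 : ℝ) 1, ENNReal.ofReal (a / max a |t - c|) ≤ ENNReal.ofReal B)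
    (s : Fin (n + 2) → ℝ) (y z : ℝ) :
    ∫⁻ w : Fin n → ℝ, ENNReal.ofReal (∏ i : Fin (n + 2) with 2 ≤ i.val,
        a / max a |affineDefect s (Fin.cons y (Fin.cons z w : Fin (n + 1) → ℝ)) i|)
        ∂(Measure.pi fun _ => volume.restrict (Icc (0 : ℝ) 1))
      ≤ ENNReal.ofReal (B ^ n) := by
  have hprod : ∀ w : Fin n → ℝ, ENNReal.ofReal (∏ i : Fin (n + 2) with 2 ≤ i.val,
        a / max a |affineDefect s (Fin.cons y (Fin.cons z w : Fin (n + 1) → ℝ)) i|)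
      = ∏ i : Fin n, ENNReal.ofReal
          (a / max a |w i - (y + (z - y) / (s 1 - s 0) * (s i.succ.succ - s 0))|) := by
    intro w
    rw [prod_fin_two_le, ENNReal.ofReal_prod_of_nonneg fun i _ => by positivity]
    simp only [affineDefect, Fin.cons_succ, Fin.cons_zero, Fin.cons_one]
  simp_rw [hprod]
  rw [lintegral_fin_prod_eq_prod (fun _ => volume.restrict (Icc (0 : ℝ) 1))
    (f := fun i w => ENNReal.ofReal
      (a / max a |w - (y + (z - y) / (s 1 - s 0) * (s i.succ.succ - s 0))|))
    fun i => by fun_prop]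
  calc _ ≤ ∏ _i : Fin n, ENNReal.ofReal B := Finset.prod_le_prod' fun i _ => h _
    _ = ENNReal.ofReal (B ^ n) := by
      rw [Finset.prod_const, Finset.card_univ, Fintype.card_fin, ENNReal.ofReal_pow hB]

theorem exists_lintegral_prod_div_max_affineDefect_le {k : ℕ} (hk : 1 ≤ k) {δ : ℝ} (hδ : 0 < δ)
    (hδ1 : δ ≤ 1) :
    ∃ C : ℝ, 0 ≤ C ∧ ∀ a : ℝ, 0 < a → ∀ s : Fin (k + 1) → ℝ,
      ∫⁻ t : Fin (k + 1) → ℝ,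
        ENNReal.ofReal (∏ i : Fin (k + 1) with 2 ≤ i.val, a / max a |affineDefect s t i|)
          ∂(Measure.pi fun _ => volume.restrict (Icc (0 : ℝ) 1))
        ≤ ENNReal.ofReal (C * a ^ ((1 - δ) * (k - 1))) := by
  obtain ⟨C, hC, hCb⟩ := exists_lintegral_div_max_abs_sub_le hδ hδ1
  obtain ⟨n, rfl⟩ := Nat.exists_eq_add_of_le' hk
  refine ⟨C ^ n, by positivity, fun a ha s => ?_⟩
  have hm := measurable_prod_div_max_affineDefect a s
  calc _ = ∫⁻ y in Icc (0 : ℝ) 1, ∫⁻ z in Icc (0 : ℝ) 1, ∫⁻ w : Fin n → ℝ, _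
          ∂(Measure.pi fun _ => volume.restrict (Icc (0 : ℝ) 1)) := by
        rw [lintegral_pi_fin_succ _ hm]
        exact lintegral_congr fun y => lintegral_pi_fin_succ _ (hm.comp (by fun_prop))
    _ ≤ ∫⁻ _y in Icc (0 : ℝ) 1, ∫⁻ _z in Icc (0 : ℝ) 1,
          ENNReal.ofReal ((C * a ^ (1 - δ)) ^ n) :=
        lintegral_mono fun y => lintegral_mono fun z =>
          lintegral_prod_div_max_affineDefect_cons_le ha (by positivity) (hCb a ha) s y z
    _ = _ := by
        simp [mul_pow, ← rpow_mul_natCast ha.le]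

end DefectIntegral

section Band

/-- Truncation of a complex number to the dyadic range of moduli `(a / 2, a]`. -/
def band (a : ℝ) (z : ℂ) : ℂ := if a / 2 < ‖z‖ ∧ ‖z‖ ≤ a then z else 0

theorem norm_band_le {a : ℝ} (ha : 0 ≤ a) (z : ℂ) : ‖band a z‖ ≤ a := by
  unfold band
  split_ifs with h
  · exact h.2
  · simpa using ha

theorem lt_norm_of_band_ne_zero {a : ℝ} {z : ℂ} (h : band a z ≠ 0) : a / 2 < ‖z‖ := by
  unfold band at h
  split_ifs at h with h'
  · exact h'.1
  · exact absurd rfl h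

theorem band_circle_smul (a : ℝ) (u : Circle) (z : ℂ) : band a (u • z) = u • band a z := by
  simp only [band, Circle.norm_smul]
  split_ifs
  · rfl
  · exact (smul_zero u).symm

@[fun_prop]
theorem measurable_band (a : ℝ) : Measurable (band a) :=
  Measurable.ite ((measurableSet_lt measurable_const measurable_norm).inter
    (measurableSet_le measurable_norm measurable_const)) measurable_id measurable_const

end Band

section HighSlice

open Polynomial

variable {k : ℕ}

/-- The slice integral `∫₀¹ e(P(s, t; x)) dt` of a phase whose coefficients `x` vanish at the
indices `(m, 0)`. -/
def highSlice (k : ℕ) (y : HighIdx k → ℝ) (s : ℝ) : ℂ :=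
  ∫ t in (0 : ℝ)..1, (𝐞 (∑ β : HighIdx k, y β * (s ^ β.e₁ * t ^ β.e₂)) : ℂ)

theorem continuous_highSlice :
    Continuous fun p : (HighIdx k → ℝ) × ℝ => highSlice k p.1 p.2 := by
  refine intervalIntegral.continuous_parametric_intervalIntegral_of_continuous' ?_ _ _
  unfold Function.uncurry
  fun_prop

theorem norm_highSlice_le (y : HighIdx k → ℝ) (s : ℝ) : ‖highSlice k y s‖ ≤ 1 := by
  simpa [highSlice] using intervalIntegral.norm_integral_le_of_norm_le_const (a := 0) (b := 1)
    (f := fun t => (𝐞 (∑ β : HighIdx k, y β * (s ^ β.e₁ * t ^ β.e₂)) : ℂ))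
    fun t _ => (Circle.norm_coe _).le

@[fun_prop]
theorem measurable_band_highSlice (a : ℝ) :
    Measurable fun p : (HighIdx k → ℝ) × ℝ => band a (highSlice k p.1 p.2) :=
  (measurable_band a).comp continuous_highSlice.measurable

/-- The measure of the set of `s ∈ J` at which the slice integral lies in the dyadic range of
`band a`. -/
def bandVolume (a : ℝ) (J : Set ℝ) (y : HighIdx k → ℝ) : ℝ≥0∞ :=
  volume.restrict J {s | band a (highSlice k y s) ≠ 0}

theorem bandVolume_le_one (a : ℝ) {J : Set ℝ} (hJ : J ⊆ Icc 0 1) (y : HighIdx k → ℝ) :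
    bandVolume a J y ≤ 1 := by
  refine (measure_mono (subset_univ _)).trans ?_
  rw [Measure.restrict_apply_univ]
  exact (measure_mono hJ).trans (by simp)

theorem setLIntegral_enorm_band_pow_le {a : ℝ} (ha : 0 ≤ a) (J : Set ℝ) (y : HighIdx k → ℝ) {n : ℕ}
    (hn : n ≠ 0) :
    ∫⁻ s in J, ‖band a (highSlice k y s)‖ₑ ^ n ≤ ENNReal.ofReal a ^ n * bandVolume a J y := by
  have hB : MeasurableSet {s | band a (highSlice k y s) ≠ 0} :=
    ((measurable_band_highSlice a).comp measurable_prodMk_left (measurableSet_singleton 0)).compl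
  rw [bandVolume, ← lintegral_indicator_one hB, ← lintegral_const_mul' _ _ (by finiteness)]
  refine lintegral_mono fun s => ?_
  by_cases h : band a (highSlice k y s) = 0
  · simp [h, hn]
  · rw [indicator_of_mem h, Pi.one_apply, mul_one, ← ofReal_norm]
    exact pow_le_pow_left' (ENNReal.ofReal_le_ofReal (norm_band_le ha _)) n

/-- The polynomial `t ↦ P(s, t; y)` obtained by freezing the first variable. -/
def slicePoly (y : HighIdx k → ℝ) (s : ℝ) : ℝ[X] :=
  ∑ β : HighIdx k, monomial β.e₂ (y β * s ^ β.e₁)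

theorem natDegree_slicePoly_le (y : HighIdx k → ℝ) (s : ℝ) : (slicePoly y s).natDegree ≤ k :=
  natDegree_sum_le_of_forall_le _ _ fun β _ => (natDegree_monomial_le _).trans <|
    (Nat.le_add_left _ _).trans β.e₁_add_e₂_le

theorem eval_slicePoly (y : HighIdx k → ℝ) (s t : ℝ) :
    (slicePoly y s).eval t = ∑ β : HighIdx k, y β * (s ^ β.e₁ * t ^ β.e₂) := by
  simp only [slicePoly, eval_finsetSum, eval_monomial, mul_assoc]

theorem coeff_taylor_slicePoly (y : HighIdx k → ℝ) (s t : ℝ) (j : ℕ) :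
    (taylor t (slicePoly y s)).coeff j = levelDeriv k y j s t := by
  rw [taylor_coeff, slicePoly, map_sum, eval_finsetSum, levelDeriv]
  refine Finset.sum_congr rfl fun β _ => ?_
  rw [hasseDeriv_monomial, eval_monomial, levelRow]
  ring

end HighSlice

section LevelSet

variable {k : ℕ}

/-- The points `t` where all the Taylor coefficients of `P(s, ·; y)` of order `j ≥ 1` are at most
`K / a ^ j`: the scale at which an oscillatory integral of size `a` concentrates. -/
def levelSet (k : ℕ) (K a : ℝ) (y : HighIdx k → ℝ) (s : ℝ) : Set ℝ :=
  {t | ∀ j, 1 ≤ j → j ≤ k → |levelDeriv k y j s t| ≤ K / a ^ j}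

theorem exists_one_le_volume_levelSet (k : ℕ) :
    ∃ K : ℝ, 1 ≤ K ∧ ∀ (y : HighIdx k → ℝ) (s a : ℝ), 0 < a → band a (highSlice k y s) ≠ 0 →
      1 ≤ ENNReal.ofReal (K / a) * volume.restrict (Icc 0 1) (levelSet k K a y s) := by
  obtain ⟨K, hK, h⟩ := exists_Icc_abs_coeff_taylor_le k
  refine ⟨K, hK, fun y s a ha hb => ?_⟩
  have hlt := lt_norm_of_band_ne_zero hb
  simp_rw [highSlice, ← eval_slicePoly] at hlt
  obtain ⟨u, hu0, hu1, hu⟩ := h _ a (natDegree_slicePoly_le y s) ha hlt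
  have hKpos : 0 < K := one_pos.trans_le hK
  have hsub : Icc u (u + a / K) ⊆ levelSet k K a y s := fun t ht j hj hjk =>
    coeff_taylor_slicePoly y s t j ▸ hu t ht j hj hjk
  calc (1 : ℝ≥0∞)
    _ = ENNReal.ofReal (K / a) * volume.restrict (Icc 0 1) (Icc u (u + a / K)) := by
        rw [Measure.restrict_eq_self _ (Icc_subset_Icc hu0 hu1), Real.volume_Icc,
          add_sub_cancel_left, ← ENNReal.ofReal_mul (by positivity),
          div_mul_div_cancel₀ ha.ne', div_self hKpos.ne', ENNReal.ofReal_one]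
    _ ≤ _ := by gcongr

/-- The triples `(y, s, t)` with `t i ∈ levelSet k K a y (s i)` for every `i`. -/
def jointLevelSet (n k : ℕ) (K a : ℝ) : Set ((HighIdx k → ℝ) × (Fin n → ℝ) × (Fin n → ℝ)) :=
  {p | ∀ i, p.2.2 i ∈ levelSet k K a p.1 (p.2.1 i)}

theorem measurableSet_jointLevelSet (n k : ℕ) (K a : ℝ) :
    MeasurableSet (jointLevelSet n k K a) := by
  have hcont (i : Fin n) (j : ℕ) :
      Continuous fun p : (HighIdx k → ℝ) × (Fin n → ℝ) × (Fin n → ℝ) =>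
        |levelDeriv k p.1 j (p.2.1 i) (p.2.2 i)| := by
    unfold levelDeriv levelRow
    fun_prop
  simp only [jointLevelSet, levelSet, mem_ofPred_eq]
  simp only [ofPred_forall]
  exact (isClosed_iInter fun i => isClosed_iInter fun j => isClosed_iInter fun _ =>
    isClosed_iInter fun _ => isClosed_le (hcont i j) continuous_const).measurableSet

theorem prod_bandVolume_le {n : ℕ} {K : ℝ}
    (hK : ∀ (y : HighIdx k → ℝ) (s a : ℝ), 0 < a → band a (highSlice k y s) ≠ 0 →
      1 ≤ ENNReal.ofReal (K / a) * volume.restrict (Icc 0 1) (levelSet k K a y s))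
    (J : Fin n → Set ℝ) {a : ℝ} (ha : 0 < a) (y : HighIdx k → ℝ) :
    ∏ i, bandVolume a (J i) y
      ≤ ENNReal.ofReal (K / a) ^ n *
        ((Measure.pi fun i => volume.restrict (J i)).prod
          (Measure.pi fun _ => volume.restrict (Icc 0 1)))
          (Prod.mk y ⁻¹' jointLevelSet n k K a) := by
  have hmeas : MeasurableSet (Prod.mk y ⁻¹' jointLevelSet n k K a) :=
    measurable_prodMk_left (measurableSet_jointLevelSet n k K a)
  simp_rw [bandVolume]
  rw [← Measure.pi_pi (fun i => volume.restrict (J i)), Measure.prod_apply hmeas,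
    ← lintegral_const_mul' _ _ (by finiteness)]
  refine le_trans ?_ ((one_mul _).symm.le.trans (mul_meas_ge_le_lintegral
    ((measurable_measure_prodMk_left hmeas).const_mul _) 1))
  refine measure_mono fun s hs => ?_
  calc (1 : ℝ≥0∞)
    _ ≤ ∏ i, ENNReal.ofReal (K / a) * volume.restrict (Icc 0 1) (levelSet k K a y (s i)) :=
        Finset.one_le_prod' fun i _ => hK y (s i) a ha (hs i trivial)
    _ = ENNReal.ofReal (K / a) ^ n * Measure.pi (fun _ => volume.restrict (Icc (0 : ℝ) 1))
          (univ.pi fun i => levelSet k K a y (s i)) := by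
        rw [Measure.pi_pi, Finset.prod_mul_distrib, Finset.prod_const, Finset.card_univ,
          Fintype.card_fin]
    _ = _ := by
        congr 2
        ext t
        simp [jointLevelSet]

theorem prod_inv_pow_e₂ {a : ℝ} (ha : 0 < a) :
    ∏ β : HighIdx k, (a ^ β.e₂)⁻¹ = a ^ (-((k : ℝ) * (k + 1) * (k + 2) / 6)) := by
  rw [← HighIdx.sum_e₂, ← Finset.sum_neg_distrib, rpow_sum_of_pos ha]
  refine Finset.prod_congr rfl fun β _ => ?_
  rw [rpow_neg ha.le, rpow_natCast]

theorem exists_lintegral_volume_levelSet_le (hk : 1 ≤ k) {g δ K : ℝ} (hg : 0 < g) (hg1 : g ≤ 1)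
    (hδ : 0 < δ) (hδ1 : δ ≤ 1) (hK : 0 ≤ K) :
    ∃ C : ℝ, 0 ≤ C ∧ ∀ a : ℝ, 0 < a → ∀ s : Fin (k + 1) → ℝ, (∀ i, s i ∈ Icc (0 : ℝ) 1) →
      (Pairwise fun i j => g ≤ |s i - s j|) →
      ∫⁻ t : Fin (k + 1) → ℝ, volume {y | ∀ i, t i ∈ levelSet k K a y (s i)}
          ∂(Measure.pi fun _ => volume.restrict (Icc 0 1))
        ≤ ENNReal.ofReal
            (C * a ^ (-((k : ℝ) * (k + 1) * (k + 2) / 6) + (1 - δ) * ((k : ℝ) - 1))) := by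
  obtain ⟨C, hC, hdefect⟩ := exists_lintegral_prod_div_max_affineDefect_le hk hδ hδ1
  set A : ℝ := (2 * ((k + 1) * g⁻¹ ^ (k + 1) * K)) ^ Fintype.card (HighIdx k)
  have hA : 0 ≤ A := by positivity
  refine ⟨A * C, by positivity, fun a ha s hs01 hs => ?_⟩
  set B : ℝ := A * ∏ β : HighIdx k, (a ^ β.e₂)⁻¹ with hB
  have hB0 : 0 ≤ B := mul_nonneg hA (Finset.prod_nonneg fun _ _ => by positivity)
  calc _ ≤ ∫⁻ t, ENNReal.ofReal B * ENNReal.ofReal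
            (∏ i : Fin (k + 1) with 2 ≤ i.val, a / max a |affineDefect s t i|)
            ∂(Measure.pi fun _ => volume.restrict (Icc 0 1)) := by
        refine lintegral_mono fun t => ?_
        rw [← ENNReal.ofReal_mul hB0]
        exact volume_levelDeriv_le hg hg1 hs01 hs hK ha
    _ ≤ ENNReal.ofReal B * ENNReal.ofReal (C * a ^ ((1 - δ) * ((k : ℝ) - 1))) := by
        rw [lintegral_const_mul' _ _ ENNReal.ofReal_ne_top]
        exact mul_le_mul_right (hdefect a ha s) _
    _ = _ := by
        rw [← ENNReal.ofReal_mul hB0, hB, prod_inv_pow_e₂ ha, rpow_add ha]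
        congr 1
        ring

theorem measure_jointLevelSet_le {n : ℕ} {K a : ℝ} {M : ℝ≥0∞} {Q : Set (Fin n → ℝ)}
    (hQm : MeasurableSet Q) (hQ : Q ⊆ Icc 0 1)
    (hM : ∀ s ∈ Q, ∫⁻ t : Fin n → ℝ, volume {y | ∀ i, t i ∈ levelSet k K a y (s i)}
      ∂(Measure.pi fun _ => volume.restrict (Icc 0 1)) ≤ M) :
    (volume.prod ((volume.restrict Q).prod (Measure.pi fun _ => volume.restrict (Icc 0 1))))
      (jointLevelSet n k K a) ≤ M := by
  have hm := measurableSet_jointLevelSet n k K a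
  rw [Measure.prod_apply_symm hm,
    lintegral_prod _ (measurable_measure_prodMk_right hm).aemeasurable]
  calc _ ≤ ∫⁻ _s in Q, M := setLIntegral_mono' hQm hM
    _ ≤ M := by
        rw [setLIntegral_const]
        exact mul_le_of_le_one_right' ((measure_mono hQ).trans (by simp [Real.volume_Icc_pi]))

theorem exists_lintegral_prod_bandVolume_le (hk : 1 ≤ k) {g δ : ℝ} (hg : 0 < g) (hg1 : g ≤ 1)
    (hδ : 0 < δ) (hδ1 : δ ≤ 1) {J : Fin (k + 1) → Set ℝ} (hJm : ∀ i, MeasurableSet (J i))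
    (hJ : ∀ i, J i ⊆ Icc 0 1)
    (hsep : Pairwise fun i j => ∀ s ∈ J i, ∀ s' ∈ J j, g ≤ |s - s'|) :
    ∃ C : ℝ, 0 ≤ C ∧ ∀ a : ℝ, 0 < a →
      ∫⁻ y : HighIdx k → ℝ, ∏ i, bandVolume a (J i) y
        ≤ ENNReal.ofReal (C *
          a ^ (-((k : ℝ) * (k + 1) * (k + 2) / 6 + 2) - (k - 1) * δ)) := by
  obtain ⟨K, hK1, hK⟩ := exists_one_le_volume_levelSet k
  have hK0 : 0 ≤ K := zero_le_one.trans hK1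
  obtain ⟨C, hC, hjoint⟩ := exists_lintegral_volume_levelSet_le hk hg hg1 hδ hδ1 hK0
  refine ⟨K ^ (k + 1) * C, by positivity, fun a ha => ?_⟩
  have hQm : MeasurableSet (univ.pi J) := .univ_pi hJm
  have hm := measurableSet_jointLevelSet (k + 1) k K a
  calc _ ≤ ∫⁻ y : HighIdx k → ℝ, ENNReal.ofReal (K / a) ^ (k + 1) *
          ((Measure.pi fun i => volume.restrict (J i)).prod
            (Measure.pi fun _ => volume.restrict (Icc 0 1)))
            (Prod.mk y ⁻¹' jointLevelSet (k + 1) k K a) :=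
        lintegral_mono fun y => prod_bandVolume_le hK J ha y
    _ = ENNReal.ofReal (K / a) ^ (k + 1) *
          (volume.prod ((volume.restrict (univ.pi J)).prod
            (Measure.pi fun _ => volume.restrict (Icc 0 1)))) (jointLevelSet (k + 1) k K a) := by
        rw [lintegral_const_mul' _ _ (by finiteness), Measure.prod_apply hm,
          volume_pi (ι := Fin (k + 1)), Measure.restrict_pi_pi]
    _ ≤ ENNReal.ofReal (K / a) ^ (k + 1) * ENNReal.ofReal
          (C * a ^ (-((k : ℝ) * (k + 1) * (k + 2) / 6) + (1 - δ) * ((k : ℝ) - 1))) := by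
        gcongr
        refine measure_jointLevelSet_le hQm (fun s hs => ?_) fun s hs => hjoint a ha s
          (fun i => hJ i (hs i trivial)) fun i j hij =>
            hsep hij _ (hs i trivial) _ (hs j trivial)
        exact ⟨fun i => (hJ i (hs i trivial)).1, fun i => (hJ i (hs i trivial)).2⟩
    _ = _ := by
        rw [← ENNReal.ofReal_pow (by positivity), ← ENNReal.ofReal_mul (by positivity),
          div_pow, div_eq_mul_inv, ← rpow_natCast a, ← rpow_neg ha.le]
        rw [show (-((k : ℝ) * (k + 1) * (k + 2) / 6 + 2) - (k - 1) * δ) = -((k + 1 : ℕ) : ℝ)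
            + (-((k : ℝ) * (k + 1) * (k + 2) / 6) + (1 - δ) * ((k : ℝ) - 1)) by
          push_cast; ring, rpow_add ha (-((k + 1 : ℕ) : ℝ))]
        congr 1
        ring

end LevelSet

section Splitting

variable {k : ℕ}

/-- The enumeration of the multi-indices `(m + 1, 0)`, those which do not involve the second
variable. -/
def lowEquiv (k : ℕ) : Fin k ≃ {β : Idx k // ¬ 1 ≤ (β.1.2 : ℕ)} where
  toFun m := ⟨⟨(m.succ, 0), by simp⟩, by simp⟩
  invFun β := ⟨(β.1.1.1 : ℕ) - 1, by
    have := β.1.2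
    have := β.2
    omega⟩
  left_inv m := by simp
  right_inv β := by
    have := β.1.2
    have := β.2
    refine Subtype.ext (Subtype.ext (Prod.ext (Fin.ext ?_) (Fin.ext ?_)))
    · simp only [Fin.val_succ]; omega
    · simp only [Fin.val_zero]; omega

/-- The coefficients of the monomials which involve the second variable. -/
def highPart (x : Idx k → ℝ) : HighIdx k → ℝ := fun β => x β.1

/-- The coefficients of the powers of the first variable. -/
def lowPart (x : Idx k → ℝ) : Fin k → ℝ := fun m => x (lowEquiv k m).1

theorem Pphase_eq_low_add_high (x : Idx k → ℝ) (s t : ℝ) :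
    Pphase k x ![s, t] = ∑ m : Fin k, lowPart x m * s ^ ((m : ℕ) + 1)
      + ∑ β : HighIdx k, highPart x β * (s ^ β.e₁ * t ^ β.e₂) := by
  rw [Pphase, ← Fintype.sum_subtype_add_sum_subtype (fun β : Idx k => 1 ≤ (β.1.2 : ℕ)), add_comm,
    ← (lowEquiv k).sum_comp]
  congr 1
  · simp [lowEquiv, lowPart]
  · simp [highPart, HighIdx.e₁, HighIdx.e₂, mul_assoc]

theorem measurePreserving_highPart_lowPart :
    MeasurePreserving fun x : Idx k → ℝ => (highPart x, lowPart x) :=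
  ((MeasurePreserving.id volume).prod (volume_preserving_arrowCongr' (lowEquiv k).symm
    (MeasurableEquiv.refl ℝ) (.id volume))).comp
    (volume_preserving_piEquivPiSubtypeProd (fun _ : Idx k => ℝ) fun β => 1 ≤ (β.1.2 : ℕ))

theorem lintegral_highPart_lowPart {f : (HighIdx k → ℝ) × (Fin k → ℝ) → ℝ≥0∞}
    (hf : Measurable f) :
    ∫⁻ x : Idx k → ℝ, f (highPart x, lowPart x) = ∫⁻ y, ∫⁻ r, f (y, r) := by
  rw [measurePreserving_highPart_lowPart.lintegral_comp hf, Measure.volume_eq_prod,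
    lintegral_prod _ hf.aemeasurable]

/-- The slice integral `∫₀¹ e(P(s, t; x)) dt`. -/
def slice (k : ℕ) (x : Idx k → ℝ) (s : ℝ) : ℂ :=
  ∫ t in (0 : ℝ)..1, (𝐞 (Pphase k x ![s, t]) : ℂ)

theorem slice_eq_smul_highSlice (x : Idx k → ℝ) (s : ℝ) :
    slice k x s = 𝐞 (∑ m : Fin k, lowPart x m * s ^ ((m : ℕ) + 1))
      • highSlice k (highPart x) s := by
  simp_rw [slice, highSlice, Pphase_eq_low_add_high, AddChar.map_add_eq_mul, Circle.coe_mul,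
    intervalIntegral.integral_const_mul, Circle.smul_def, smul_eq_mul]

/-- The contribution to `∫_{J × [0, 1]} e(P(ξ; x)) dξ` of the slices with integral in the dyadic
range of `band a`. -/
def bandPart (k : ℕ) (a : ℝ) (J : Set ℝ) (x : Idx k → ℝ) : ℂ :=
  ∫ s in J, band a (slice k x s)

/-- `bandPart` in terms of the coefficients of the monomials which involve the second variable
(`y`) and of the powers of the first one (`r`). -/
def splitBandPart (a : ℝ) (J : Set ℝ) (y : HighIdx k → ℝ) (r : Fin k → ℝ) : ℂ :=
  ∫ s in J, 𝐞 (∑ m : Fin k, r m * s ^ ((m : ℕ) + 1)) • band a (highSlice k y s)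

theorem bandPart_eq_splitBandPart (a : ℝ) (J : Set ℝ) (x : Idx k → ℝ) :
    bandPart k a J x = splitBandPart a J (highPart x) (lowPart x) := by
  simp_rw [bandPart, splitBandPart, slice_eq_smul_highSlice, band_circle_smul]

theorem measurable_splitBandPart (a : ℝ) (J : Set ℝ) :
    Measurable fun p : (HighIdx k → ℝ) × (Fin k → ℝ) => splitBandPart a J p.1 p.2 := by
  have hband := (measurable_band_highSlice (k := k) a).comp
    (f := fun q : ((HighIdx k → ℝ) × (Fin k → ℝ)) × ℝ => (q.1.1, q.2)) (by fun_prop)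
  have hchar : Measurable fun q : ((HighIdx k → ℝ) × (Fin k → ℝ)) × ℝ =>
      (𝐞 (∑ m : Fin k, q.1.2 m * q.2 ^ ((m : ℕ) + 1)) : ℂ) :=
    Continuous.measurable (by fun_prop)
  exact (hchar.mul hband).stronglyMeasurable.integral_prod_right'.measurable

theorem enorm_splitBandPart_le {a : ℝ} (ha : 0 ≤ a) (J : Set ℝ) (y : HighIdx k → ℝ)
    (r : Fin k → ℝ) : ‖splitBandPart a J y r‖ₑ ≤ ENNReal.ofReal a * bandVolume a J y := by
  refine (enorm_integral_le_lintegral_enorm _).trans ?_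
  simp_rw [← ofReal_norm, Circle.norm_smul, ofReal_norm]
  simpa using setLIntegral_enorm_band_pow_le ha J y one_ne_zero

end Splitting

section SeparatedIntervals

variable {k : ℕ}

theorem enorm_finset_prod {ι 𝕜 : Type*} [NormedField 𝕜] (S : Finset ι) (f : ι → 𝕜) :
    ‖∏ i ∈ S, f i‖ₑ = ∏ i ∈ S, ‖f i‖ₑ := by
  simp_rw [← ofReal_norm, norm_prod, ENNReal.ofReal_prod_of_nonneg fun _ _ => norm_nonneg _]

theorem coe_fourierChar_sum {ι : Type*} (S : Finset ι) (f : ι → ℝ) :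
    (𝐞 (∑ i ∈ S, f i) : ℂ) = ∏ i ∈ S, (𝐞 (f i) : ℂ) := by
  simp_rw [Real.fourierChar_apply, ← Complex.exp_sum, ← Finset.sum_mul, ← Complex.ofReal_sum,
    ← Finset.mul_sum]

theorem prod_splitBandPart (a : ℝ) (J : Fin k → Set ℝ) (y : HighIdx k → ℝ) (r : Fin k → ℝ) :
    ∏ i, splitBandPart a (J i) y r = ∫ s in univ.pi J,
      𝐞 (∑ m, r m * powerSums s m) • ∏ i, band a (highSlice k y (s i)) := by
  rw [volume_pi, Measure.restrict_pi_pi]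
  simp_rw [splitBandPart]
  rw [← integral_fintype_prod_eq_prod]
  refine integral_congr_ae (.of_forall fun s => ?_)
  simp only [Circle.smul_def, smul_eq_mul, powerSums]
  rw [Finset.prod_mul_distrib, ← coe_fourierChar_sum, Finset.sum_comm]
  simp_rw [Finset.mul_sum]

theorem measurable_band_highSlice_right (a : ℝ) (y : HighIdx k → ℝ) :
    Measurable fun s => band a (highSlice k y s) :=
  (measurable_band_highSlice a).comp (f := fun s => (y, s)) (by fun_prop)

theorem integrableOn_prod_band_highSlice {a : ℝ} (ha : 0 ≤ a) {n : ℕ} {Q : Set (Fin n → ℝ)}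
    (hQ : volume Q ≠ ⊤) (y : HighIdx k → ℝ) :
    IntegrableOn (fun s : Fin n → ℝ => ∏ i, band a (highSlice k y (s i))) Q := by
  refine .of_bound hQ.lt_top (Finset.measurable_prod _ fun i _ =>
    (measurable_band_highSlice_right a y).comp (measurable_pi_apply i)).aestronglyMeasurable (a ^ n)
    (.of_forall fun s => ?_)
  rw [norm_prod]
  exact (Finset.prod_le_prod (fun _ _ => norm_nonneg _) fun i _ => norm_band_le ha _).trans
    (by simp)

theorem lintegral_prod_enorm_sq_splitBandPart_le {ρ : ℝ} (hρ : 0 < ρ) {J : Fin k → Set ℝ}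
    (hJm : ∀ i, MeasurableSet (J i)) (hJ : ∀ i, J i ⊆ Icc 0 1)
    (hsep : ∀ i j, i < j → ∀ s ∈ J i, ∀ s' ∈ J j, s + ρ ≤ s') {a : ℝ} (ha : 0 ≤ a)
    (y : HighIdx k → ℝ) :
    ∫⁻ r : Fin k → ℝ, ∏ i, ‖splitBandPart a (J i) y r‖ₑ ^ 2
      ≤ ENNReal.ofReal (ρ ^ k.choose 2)⁻¹
        * ∏ i, (ENNReal.ofReal a ^ 2 * bandVolume a (J i) y) := by
  have hQ : volume (univ.pi J) ≠ ⊤ := by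
    rw [volume_pi_pi]
    exact ENNReal.prod_ne_top fun i _ => ((measure_mono (hJ i)).trans_lt (by simp)).ne
  simp_rw [Finset.prod_pow, ← enorm_finset_prod, prod_splitBandPart]
  calc _ ≤ ENNReal.ofReal (ρ ^ k.choose 2)⁻¹
          * ∫⁻ s in univ.pi J, ‖∏ i, band a (highSlice k y (s i))‖ₑ ^ 2 :=
        lintegral_enorm_sq_setIntegral_fourierChar_powerSums_le (.univ_pi hJm) hρ
          (fun s hs i j hij => hsep i j hij _ (hs i trivial) _ (hs j trivial))
          (integrableOn_prod_band_highSlice ha hQ y)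
    _ = ENNReal.ofReal (ρ ^ k.choose 2)⁻¹
          * ∏ i, ∫⁻ s in J i, ‖band a (highSlice k y s)‖ₑ ^ 2 := by
        rw [volume_pi, Measure.restrict_pi_pi, ← lintegral_fin_prod_eq_prod
          (fun i => volume.restrict (J i)) fun i =>
            (measurable_band_highSlice_right a y).enorm.pow_const 2]
        simp_rw [enorm_finset_prod, Finset.prod_pow]
    _ ≤ _ := by
        gcongr with i
        exact setLIntegral_enorm_band_pow_le ha (J i) y two_ne_zero

theorem rpow_le_rpow_mul_of_le_mul {A V z : ℝ≥0∞} {u : ℝ} (hu : 1 ≤ u) (hV : V ≤ 1)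
    (hz : z ≤ A * V) : z ^ u ≤ A ^ u * V := by
  have hu0 : 0 ≤ u := zero_le_one.trans hu
  calc z ^ u ≤ (A * V) ^ u := ENNReal.rpow_le_rpow hz hu0
    _ = A ^ u * V ^ u := ENNReal.mul_rpow_of_nonneg _ _ hu0
    _ ≤ A ^ u * V ^ (1 : ℝ) := mul_le_mul_right (ENNReal.rpow_le_rpow_of_exponent_ge hV hu) _
    _ = A ^ u * V := by rw [ENNReal.rpow_one]

theorem rpow_le_rpow_sub_two_mul_sq {A z : ℝ≥0∞} {u : ℝ} (hu : 2 ≤ u) (hz : z ≤ A) :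
    z ^ u ≤ A ^ (u - 2) * z ^ 2 := by
  calc z ^ u = z ^ (u - 2) * z ^ (2 : ℝ) := by
        rw [← ENNReal.rpow_add_of_nonneg _ _ (by linarith) zero_le_two, sub_add_cancel]
    _ ≤ A ^ (u - 2) * z ^ 2 := by
        rw [ENNReal.rpow_two]
        gcongr

theorem rpow_mul_rpow_sub_two_pow_mul_sq_pow {A : ℝ≥0∞} (u : ℝ) (hA : A ≠ 0) (hA' : A ≠ ⊤)
    (n : ℕ) : A ^ u * (A ^ (u - 2)) ^ n * (A ^ 2) ^ n = A ^ ((n + 1) * u) := by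
  rw [mul_assoc, ← mul_pow, ← ENNReal.rpow_two, ← ENNReal.rpow_add _ _ hA hA', sub_add_cancel,
    ← ENNReal.rpow_mul_natCast, ← ENNReal.rpow_add _ _ hA hA']
  ring_nf

theorem lintegral_prod_enorm_rpow_splitBandPart_le {u ρ : ℝ} (hu : 2 ≤ u) (hρ : 0 < ρ)
    {J : Fin (k + 1) → Set ℝ} (hJm : ∀ i, MeasurableSet (J i)) (hJ : ∀ i, J i ⊆ Icc 0 1)
    (hsep : ∀ i j, i < j → ∀ s ∈ J i, ∀ s' ∈ J j, s + ρ ≤ s') {a : ℝ} (ha : 0 < a)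
    (y : HighIdx k → ℝ) :
    ∫⁻ r : Fin k → ℝ, ∏ i, ‖splitBandPart a (J i) y r‖ₑ ^ u
      ≤ ENNReal.ofReal (ρ ^ k.choose 2)⁻¹ * ENNReal.ofReal a ^ ((k + 1) * u)
        * ∏ i, bandVolume a (J i) y := by
  set A := ENNReal.ofReal a
  have hV i : bandVolume a (J i) y ≤ 1 := bandVolume_le_one a (hJ i) y
  have hbound i (r : Fin k → ℝ) : ‖splitBandPart a (J i) y r‖ₑ ≤ A * bandVolume a (J i) y :=
    enorm_splitBandPart_le ha.le (J i) y r
  calc _ ≤ ∫⁻ r : Fin k → ℝ, A ^ u * bandVolume a (J 0) y *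
          ∏ i : Fin k, (A ^ (u - 2) * ‖splitBandPart a (J i.succ) y r‖ₑ ^ 2) := by
        refine lintegral_mono fun r => ?_
        rw [Fin.prod_univ_succ]
        gcongr with i
        · exact rpow_le_rpow_mul_of_le_mul (by linarith) (hV 0) (hbound 0 r)
        · exact rpow_le_rpow_sub_two_mul_sq hu
            ((hbound i.succ r).trans (mul_le_of_le_one_right' (hV i.succ)))
    _ = A ^ u * bandVolume a (J 0) y * ((A ^ (u - 2)) ^ k *
          ∫⁻ r : Fin k → ℝ, ∏ i : Fin k, ‖splitBandPart a (J i.succ) y r‖ₑ ^ 2) := by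
        have hm : Measurable fun r : Fin k → ℝ =>
            ∏ i : Fin k, ‖splitBandPart a (J i.succ) y r‖ₑ ^ 2 :=
          Finset.measurable_prod _ fun i _ => ((measurable_splitBandPart a (J i.succ)).comp
            measurable_prodMk_left).enorm.pow_const 2
        simp_rw [Finset.prod_mul_distrib, Finset.prod_const, Finset.card_univ, Fintype.card_fin]
        rw [lintegral_const_mul _ (hm.const_mul _), lintegral_const_mul _ hm]
    _ ≤ A ^ u * bandVolume a (J 0) y * ((A ^ (u - 2)) ^ k * (ENNReal.ofReal (ρ ^ k.choose 2)⁻¹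
          * ∏ i : Fin k, (A ^ 2 * bandVolume a (J i.succ) y))) := by
        gcongr
        exact lintegral_prod_enorm_sq_splitBandPart_le hρ (fun i => hJm i.succ)
          (fun i => hJ i.succ) (fun i j hij => hsep _ _ (Fin.succ_lt_succ_iff.2 hij)) ha.le y
    _ = _ := by
        rw [← rpow_mul_rpow_sub_two_pow_mul_sq_pow u (by simpa [A] using ha) (by finiteness),
          Finset.prod_mul_distrib, Finset.prod_const, Finset.card_univ, Fintype.card_fin,
          Fin.prod_univ_succ fun i => bandVolume a (J i) y]
        ring

theorem exists_lintegral_prod_bandPart_le (hk : 1 ≤ k) {u δ ρ : ℝ} (hu : 2 ≤ u) (hδ : 0 < δ)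
    (hδ1 : δ ≤ 1) (hρ : 0 < ρ) {J : Fin (k + 1) → Set ℝ} (hJm : ∀ i, MeasurableSet (J i))
    (hJ : ∀ i, J i ⊆ Icc 0 1) (hsep : ∀ i j, i < j → ∀ s ∈ J i, ∀ s' ∈ J j, s + ρ ≤ s') :
    ∃ C : ℝ, 0 ≤ C ∧ ∀ a : ℝ, 0 < a →
      ∫⁻ x : Idx k → ℝ, ∏ i, ‖bandPart k a (J i) x‖ₑ ^ u
        ≤ ENNReal.ofReal (C *
          a ^ ((k + 1) * u - ((k : ℝ) * (k + 1) * (k + 2) / 6 + 2) - (k - 1) * δ)) := by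
  have habs : Pairwise fun i j => ∀ s ∈ J i, ∀ s' ∈ J j, min 1 ρ ≤ |s - s'| := by
    intro i j hij s hs s' hs'
    refine (min_le_right _ _).trans ?_
    rcases lt_or_gt_of_ne hij with h | h
    · rw [abs_sub_comm]
      exact (by linarith [hsep i j h s hs s' hs'] : ρ ≤ s' - s).trans (le_abs_self _)
    · exact (by linarith [hsep j i h s' hs' s hs] : ρ ≤ s - s').trans (le_abs_self _)
  obtain ⟨C, hC, hvol⟩ := exists_lintegral_prod_bandVolume_le hk (lt_min one_pos hρ)
    (min_le_left 1 ρ) hδ hδ1 hJm hJ habs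
  refine ⟨(ρ ^ k.choose 2)⁻¹ * C, by positivity, fun a ha => ?_⟩
  simp_rw [bandPart_eq_splitBandPart]
  rw [lintegral_highPart_lowPart (f := fun p => ∏ i, ‖splitBandPart a (J i) p.1 p.2‖ₑ ^ u)
    (Finset.measurable_prod _ fun i _ => (measurable_splitBandPart a (J i)).enorm.pow_const u)]
  calc _ ≤ ∫⁻ y : HighIdx k → ℝ, ENNReal.ofReal (ρ ^ k.choose 2)⁻¹
          * ENNReal.ofReal a ^ ((k + 1) * u) * ∏ i, bandVolume a (J i) y :=
        lintegral_mono fun y => lintegral_prod_enorm_rpow_splitBandPart_le hu hρ hJm hJ hsep ha y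
    _ ≤ ENNReal.ofReal (ρ ^ k.choose 2)⁻¹ * ENNReal.ofReal a ^ ((k + 1) * u)
          * ENNReal.ofReal
            (C * a ^ (-((k : ℝ) * (k + 1) * (k + 2) / 6 + 2) - (k - 1) * δ)) := by
        rw [lintegral_const_mul' _ _ (by finiteness)]
        exact mul_le_mul_right (hvol a ha) _
    _ = _ := by
        rw [ENNReal.ofReal_rpow_of_pos ha, ← ENNReal.ofReal_mul (by positivity),
          ← ENNReal.ofReal_mul (by positivity), show (k + 1) * u
            - ((k : ℝ) * (k + 1) * (k + 2) / 6 + 2) - (k - 1) * δ = (k + 1) * u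
            + (-((k : ℝ) * (k + 1) * (k + 2) / 6 + 2) - (k - 1) * δ) by ring, rpow_add ha]
        congr 1
        ring

end SeparatedIntervals

section BroadNarrow

variable {E : Type*} [SeminormedAddCommGroup E]

theorem exists_norm_sum_le_or_lt_card {ι : Type*} [Fintype ι] [Nonempty ι] (v : ι → E) (n : ℕ) :
    (∃ j, ‖∑ j, v j‖ ≤ 2 * (n + 1) * ‖v j‖) ∨
      n < Finset.card {j | ‖∑ j, v j‖ ≤ 2 * Fintype.card ι * ‖v j‖} := by
  set S := ‖∑ j, v j‖
  set T : Finset ι := {j | S ≤ 2 * Fintype.card ι * ‖v j‖}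
  by_contra! hcon
  obtain ⟨hlarge, hcard⟩ := hcon
  have : (0 : ℝ) < Fintype.card ι := by exact_mod_cast Fintype.card_pos
  have hS0 : 0 < S := (hlarge (Classical.arbitrary ι)).trans_le' (by positivity)
  have hsumT : ∑ j ∈ T, ‖v j‖ ≤ n * (S / (2 * (n + 1))) := by
    calc ∑ j ∈ T, ‖v j‖ ≤ T.card • (S / (2 * (n + 1))) :=
          Finset.sum_le_card_nsmul _ _ _ fun j _ => by
            rw [le_div_iff₀ (by positivity), mul_comm]
            exact (hlarge j).le
      _ ≤ n * (S / (2 * (n + 1))) := by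
          rw [nsmul_eq_mul]
          gcongr
  have hsumTc : ∑ j with ¬ S ≤ 2 * Fintype.card ι * ‖v j‖, ‖v j‖ ≤ S / 2 := by
    calc _ ≤ ∑ j with ¬ S ≤ 2 * Fintype.card ι * ‖v j‖, S / (2 * Fintype.card ι) :=
          Finset.sum_le_sum fun j hj => by
            rw [le_div_iff₀ (by positivity), mul_comm]
            exact (not_le.1 (Finset.mem_filter.1 hj).2).le
      _ ≤ ∑ _j : ι, S / (2 * Fintype.card ι) :=
          Finset.sum_le_sum_of_subset_of_nonneg (Finset.filter_subset _ _)
            fun _ _ _ => by positivity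
      _ = S / 2 := by
          rw [Finset.sum_const, Finset.card_univ, nsmul_eq_mul]
          field_simp
  have hsplit : S ≤ ∑ j ∈ T, ‖v j‖
      + ∑ j with ¬ S ≤ 2 * Fintype.card ι * ‖v j‖, ‖v j‖ := by
    refine (norm_sum_le _ _).trans_eq ?_
    exact (Finset.sum_filter_add_sum_filter_not _ _ _).symm
  have hlt : n * (S / (2 * (n + 1))) < S / 2 := by
    rw [mul_div_assoc', div_lt_div_iff₀ (by positivity) two_pos]
    nlinarith
  linarith

/-- Increasing `n`-tuples of pairwise non-adjacent indices below `M`. -/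
def spacedTuples (n M : ℕ) : Finset (Fin n → Fin M) :=
  {c | ∀ i j, i < j → (c i : ℕ) + 2 ≤ c j}

theorem exists_mem_spacedTuples_forall_mem {k M : ℕ} (T : Finset (Fin M)) (hT : 2 * k < T.card) :
    ∃ c ∈ spacedTuples (k + 1) M, ∀ i, c i ∈ T := by
  let e := T.orderEmbOfFin rfl
  refine ⟨fun i => e ⟨2 * i, by omega⟩, ?_, fun i => T.orderEmbOfFin_mem rfl _⟩
  simp only [spacedTuples, Finset.mem_filter, Finset.mem_univ, true_and]
  intro i j hij
  have h₁ : e ⟨2 * i, by omega⟩ < e ⟨2 * i + 1, by omega⟩ := by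
    rw [e.lt_iff_lt, Fin.mk_lt_mk]; omega
  have h₂ : e ⟨2 * i + 1, by omega⟩ < e ⟨2 * j, by omega⟩ := by
    rw [e.lt_iff_lt, Fin.mk_lt_mk]; omega
  rw [Fin.lt_def] at hij h₁ h₂
  omega

theorem broad_or_narrow (k : ℕ) {M : ℕ} (hM : 0 < M) (v : Fin M → E) :
    (∃ j, ‖∑ j, v j‖ ≤ 2 * (2 * k + 1) * ‖v j‖) ∨
      ∃ c ∈ spacedTuples (k + 1) M, ∀ i, ‖∑ j, v j‖ ≤ 2 * M * ‖v (c i)‖ := by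
  have : Nonempty (Fin M) := ⟨⟨0, hM⟩⟩
  refine (exists_norm_sum_le_or_lt_card v (2 * k)).imp (fun h => by simpa using h) fun hT => ?_
  obtain ⟨c, hc, hcT⟩ := exists_mem_spacedTuples_forall_mem _ hT
  exact ⟨c, hc, fun i => by simpa using hcT i⟩

theorem enorm_le_ofReal_mul_enorm {A : ℝ} {z w : E} (hA : 0 ≤ A) (h : ‖z‖ ≤ A * ‖w‖) :
    ‖z‖ₑ ≤ ENNReal.ofReal A * ‖w‖ₑ := by
  rw [← ofReal_norm, ← ofReal_norm, ← ENNReal.ofReal_mul hA]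
  exact ENNReal.ofReal_le_ofReal h

theorem enorm_sum_rpow_le (k : ℕ) {M : ℕ} (hM : 0 < M) {u : ℝ} (hu : 0 ≤ u) (v : Fin M → E) :
    ‖∑ j, v j‖ₑ ^ ((k + 1) * u)
      ≤ ENNReal.ofReal (2 * (2 * k + 1)) ^ ((k + 1) * u) * ∑ j, ‖v j‖ₑ ^ ((k + 1) * u)
        + ENNReal.ofReal (2 * M) ^ ((k + 1) * u)
          * ∑ c ∈ spacedTuples (k + 1) M, ∏ i, ‖v (c i)‖ₑ ^ u := by
  have hp : 0 ≤ ((k : ℝ) + 1) * u := by positivity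
  rcases broad_or_narrow k hM v with ⟨j, hj⟩ | ⟨c, hc, hbroad⟩
  · refine le_trans ?_ le_self_add
    calc _ ≤ (ENNReal.ofReal (2 * (2 * k + 1)) * ‖v j‖ₑ) ^ ((k + 1) * u) :=
          ENNReal.rpow_le_rpow (enorm_le_ofReal_mul_enorm (by positivity) hj) hp
      _ = ENNReal.ofReal (2 * (2 * k + 1)) ^ ((k + 1) * u) * ‖v j‖ₑ ^ ((k + 1) * u) :=
          ENNReal.mul_rpow_of_nonneg _ _ hp
      _ ≤ _ := mul_le_mul_right (Finset.single_le_sum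
          (f := fun j => ‖v j‖ₑ ^ ((k + 1) * u)) (fun _ _ => zero_le) (Finset.mem_univ j)) _
  · refine le_trans ?_ le_add_self
    have hpow (z : ℝ≥0∞) : z ^ (((k : ℝ) + 1) * u) = ∏ _i : Fin (k + 1), z ^ u := by
      rw [mul_comm, ENNReal.rpow_mul, Finset.prod_const, Finset.card_univ, Fintype.card_fin]
      exact_mod_cast ENNReal.rpow_natCast _ (k + 1)
    calc _ ≤ ENNReal.ofReal (2 * M) ^ ((k + 1) * u) * ∏ i, ‖v (c i)‖ₑ ^ u := by
          rw [hpow, hpow, ← Finset.prod_mul_distrib]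
          refine Finset.prod_le_prod' fun i _ => ?_
          rw [← ENNReal.mul_rpow_of_nonneg _ _ hu]
          exact ENNReal.rpow_le_rpow (enorm_le_ofReal_mul_enorm (by positivity) (hbroad i)) hu
      _ ≤ _ := mul_le_mul_right (Finset.single_le_sum
          (f := fun c : Fin (k + 1) → Fin M => ∏ i, ‖v (c i)‖ₑ ^ u) (fun _ _ => zero_le) hc) _

end BroadNarrow

section Iteration

variable {X : Type*} {ι : Type*} [Fintype ι]

/-- The operator `g ↦ θ ∑ⱼ g ∘ Lⱼ` through which a self-improving inequality
`f ≤ θ ∑ⱼ f ∘ Lⱼ + B` refers back to `f`. -/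
def transfer (θ : ℝ≥0∞) (L : ι → X → X) (g : X → ℝ≥0∞) (x : X) : ℝ≥0∞ :=
  θ * ∑ j, g (L j x)

theorem le_sum_iterate_transfer_add {f B : X → ℝ≥0∞} {L : ι → X → X} {θ r : ℝ≥0∞}
    (hf₁ : ∀ x, f x ≤ 1) (hf : ∀ x, f x ≤ transfer θ L f x + B x)
    (hr : θ * Fintype.card ι ≤ r) (n : ℕ) (x : X) :
    f x ≤ ∑ i ∈ Finset.range n, (transfer θ L)^[i] B x + r ^ n := by
  induction n generalizing x with
  | zero => simpa using hf₁ x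
  | succ n ih =>
    calc f x ≤ θ * ∑ j, f (L j x) + B x := hf x
      _ ≤ θ * ∑ j, (∑ i ∈ Finset.range n, (transfer θ L)^[i] B (L j x) + r ^ n) + B x := by
        gcongr with j _
        exact ih _
      _ = ∑ i ∈ Finset.range n, θ * ∑ j, (transfer θ L)^[i] B (L j x)
          + θ * Fintype.card ι * r ^ n + B x := by
        rw [Finset.sum_add_distrib, Finset.sum_const, Finset.card_univ, nsmul_eq_mul, mul_add,
          Finset.sum_comm, Finset.mul_sum, mul_assoc]
      _ = ∑ i ∈ Finset.range (n + 1), (transfer θ L)^[i] B x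
          + θ * Fintype.card ι * r ^ n := by
        simp_rw [Finset.sum_range_succ', Function.iterate_succ_apply', Function.iterate_zero, id,
          transfer]
        ring
      _ ≤ _ := by
        rw [pow_succ']
        gcongr

theorem le_tsum_iterate_transfer {f B : X → ℝ≥0∞} {L : ι → X → X} {θ r : ℝ≥0∞}
    (hf₁ : ∀ x, f x ≤ 1) (hf : ∀ x, f x ≤ transfer θ L f x + B x)
    (hr : θ * Fintype.card ι ≤ r) (hr₁ : r < 1) (x : X) :
    f x ≤ ∑' n, (transfer θ L)^[n] B x := by
  have hlim := (ENNReal.tendsto_pow_atTop_nhds_zero_of_lt_one hr₁).const_add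
    (∑' n, (transfer θ L)^[n] B x)
  rw [add_zero] at hlim
  exact ge_of_tendsto' hlim fun n => (le_sum_iterate_transfer_add hf₁ hf hr n x).trans
    (add_le_add_left (ENNReal.sum_le_tsum _) _)

variable [MeasurableSpace X] {μ : Measure X}

theorem measurable_iterate_transfer {B : X → ℝ≥0∞} {L : ι → X → X} (θ : ℝ≥0∞)
    (hB : Measurable B) (hL : ∀ j, Measurable (L j)) (n : ℕ) :
    Measurable ((transfer θ L)^[n] B) := by
  induction n with
  | zero => exact hB
  | succ n ih =>
    rw [Function.iterate_succ']
    exact (Finset.measurable_sum _ fun j _ => ih.comp (hL j)).const_mul _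

theorem lintegral_iterate_transfer_le {B : X → ℝ≥0∞} {L : ι → X → X} {θ D r : ℝ≥0∞}
    (hB : Measurable B) (hL : ∀ j, Measurable (L j))
    (hLD : ∀ j, ∀ g : X → ℝ≥0∞, Measurable g → ∫⁻ x, g (L j x) ∂μ = D * ∫⁻ x, g x ∂μ)
    (hr : θ * (Fintype.card ι * D) ≤ r) (n : ℕ) :
    ∫⁻ x, (transfer θ L)^[n] B x ∂μ ≤ r ^ n * ∫⁻ x, B x ∂μ := by
  induction n with
  | zero => simp
  | succ n ih =>
    have hm := measurable_iterate_transfer θ hB hL n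
    have hmL j : Measurable fun x => (transfer θ L)^[n] B (L j x) := hm.comp (hL j)
    calc ∫⁻ x, (transfer θ L)^[n + 1] B x ∂μ
        = θ * (Fintype.card ι * D) * ∫⁻ x, (transfer θ L)^[n] B x ∂μ := by
          simp_rw [Function.iterate_succ_apply', transfer.eq_1 θ L ((transfer θ L)^[n] B)]
          rw [lintegral_const_mul _ (Finset.measurable_sum _ fun j _ => hmL j),
            lintegral_finsetSum _ fun j _ => hmL j]
          simp_rw [hLD _ _ hm]
          rw [Finset.sum_const, Finset.card_univ, nsmul_eq_mul, mul_assoc θ, mul_assoc]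
      _ ≤ r * (r ^ n * ∫⁻ x, B x ∂μ) := mul_le_mul' hr ih
      _ = r ^ (n + 1) * ∫⁻ x, B x ∂μ := by rw [← mul_assoc, pow_succ']

theorem lintegral_le_two_mul_of_le_transfer_add {f B : X → ℝ≥0∞} {L : ι → X → X} {θ D : ℝ≥0∞}
    (hB : Measurable B) (hL : ∀ j, Measurable (L j))
    (hLD : ∀ j, ∀ g : X → ℝ≥0∞, Measurable g → ∫⁻ x, g (L j x) ∂μ = D * ∫⁻ x, g x ∂μ)
    (hf₁ : ∀ x, f x ≤ 1) (hf : ∀ x, f x ≤ transfer θ L f x + B x)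
    (hθ : θ * Fintype.card ι ≤ 2⁻¹) (hθD : θ * (Fintype.card ι * D) ≤ 2⁻¹) :
    ∫⁻ x, f x ∂μ ≤ 2 * ∫⁻ x, B x ∂μ := by
  calc ∫⁻ x, f x ∂μ ≤ ∫⁻ x, ∑' n, (transfer θ L)^[n] B x ∂μ := lintegral_mono <|
        le_tsum_iterate_transfer hf₁ hf hθ (ENNReal.inv_lt_one.2 ENNReal.one_lt_two)
    _ = ∑' n, ∫⁻ x, (transfer θ L)^[n] B x ∂μ :=
        lintegral_tsum fun n => (measurable_iterate_transfer θ hB hL n).aemeasurable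
    _ ≤ ∑' n, 2⁻¹ ^ n * ∫⁻ x, B x ∂μ :=
        ENNReal.tsum_le_tsum (lintegral_iterate_transfer_le hB hL hLD hθD)
    _ = 2 * ∫⁻ x, B x ∂μ := by
        rw [ENNReal.tsum_mul_right, ENNReal.tsum_geometric, ENNReal.one_sub_inv_two, inv_inv]

end Iteration

section Rescaling

variable {k : ℕ}

theorem Idx.sum_eq_sum_range_sub {f : ℕ → ℕ → ℝ} (hf : ∀ i j, k < i + j → f i j = 0) :
    ∑ β : Idx k, f β.1.1 β.1.2
      = ∑ i ∈ Finset.range (k + 1), ∑ j ∈ Finset.range (k + 1), f i j - f 0 0 := by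
  have hite (i j : ℕ) : (if 1 ≤ i + j ∧ i + j ≤ k then f i j else 0)
      = f i j - if i = 0 then if j = 0 then f 0 0 else 0 else 0 := by
    rcases Nat.eq_zero_or_pos (i + j) with h₀ | h₀
    · obtain ⟨rfl, rfl⟩ : i = 0 ∧ j = 0 := by omega
      simp
    · have hij : ¬ (i = 0 ∧ j = 0) := by omega
      rw [← ite_and, if_neg hij, sub_zero, ite_eq_left_iff]
      exact fun h => (hf i j (by omega)).symm
  simp_rw [Idx.sum_eq_sum_range, hite, Finset.sum_sub_distrib]
  simp

/-- The linear action on the coefficients of a phase of the substitution which replaces the first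
variable `s` by `h + l * s`; the constant term that it creates is dropped. -/
def rescale (k : ℕ) (h l : ℝ) : Matrix (Idx k) (Idx k) ℝ := fun γ β =>
  if (β.1.2 : ℕ) = γ.1.2 then
    (β.1.1 : ℕ).choose γ.1.1 * h ^ ((β.1.1 : ℕ) - γ.1.1) * l ^ (γ.1.1 : ℕ)
  else 0

theorem sum_rescale_mul_monomial (h l s t : ℝ) (β : Idx k) :
    ∑ γ : Idx k, rescale k h l γ β * (s ^ (γ.1.1 : ℕ) * t ^ (γ.1.2 : ℕ))
      = (h + l * s) ^ (β.1.1 : ℕ) * t ^ (β.1.2 : ℕ)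
        - if (β.1.2 : ℕ) = 0 then h ^ (β.1.1 : ℕ) else 0 := by
  obtain ⟨⟨⟨a, ha⟩, ⟨b, hb⟩⟩, _, hab⟩ := β
  replace hab : a + b ≤ k := hab
  unfold rescale
  rw [Idx.sum_eq_sum_range_sub (k := k) (f := fun i j =>
    (if b = j then (a.choose i : ℝ) * h ^ (a - i) * l ^ i else 0) * (s ^ i * t ^ j))]
  · simp only [ite_mul, zero_mul, Finset.sum_ite_eq, Finset.mem_range, Nat.lt_succ_iff,
      show b ≤ k by omega, if_true]
    rw [add_comm h, add_pow, ← Finset.sum_subset (Finset.range_subset_range.2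
      (by omega : a + 1 ≤ k + 1)) fun i _ hi => by
        rw [Nat.choose_eq_zero_of_lt (by simpa using hi)]; simp]
    simp only [Finset.sum_mul]
    congr 1
    · refine Finset.sum_congr rfl fun i _ => ?_
      rw [mul_pow]; ring
    · simp
  · intro i j hij
    split_ifs with hbj
    · rw [Nat.choose_eq_zero_of_lt (by omega)]; simp
    · rw [zero_mul]

theorem Pphase_add_mul (x : Idx k → ℝ) (h l s t : ℝ) :
    Pphase k x ![h + l * s, t]
      = (∑ β : Idx k, x β * if (β.1.2 : ℕ) = 0 then h ^ (β.1.1 : ℕ) else 0)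
        + Pphase k ((rescale k h l).mulVec x) ![s, t] := by
  simp only [Pphase, Matrix.cons_val_zero, Matrix.cons_val_one, Matrix.mulVec, dotProduct,
    Finset.sum_mul]
  rw [Finset.sum_comm, ← Finset.sum_add_distrib]
  refine Finset.sum_congr rfl fun β _ => ?_
  calc x β * (h + l * s) ^ (β.1.1 : ℕ) * t ^ (β.1.2 : ℕ)
      = x β * ((if (β.1.2 : ℕ) = 0 then h ^ (β.1.1 : ℕ) else 0) +
          ∑ γ : Idx k, rescale k h l γ β * (s ^ (γ.1.1 : ℕ) * t ^ (γ.1.2 : ℕ))) := by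
        rw [sum_rescale_mul_monomial]; ring
    _ = _ := by
        rw [mul_add, Finset.mul_sum]
        congr 1
        exact Finset.sum_congr rfl fun γ _ => by ring

theorem blockTriangular_rescale (h l : ℝ) :
    (rescale k h l).BlockTriangular fun β => toLex ((β.1.1 : ℕ), (β.1.2 : ℕ)) := by
  intro γ β hlt
  simp only [rescale, ite_eq_right_iff]
  intro hsnd
  have hfst : (β.1.1 : ℕ) < γ.1.1 := by
    rw [Prod.Lex.toLex_lt_toLex] at hlt
    omega
  simp [Nat.choose_eq_zero_of_lt hfst]

theorem det_rescale (h l : ℝ) : (rescale k h l).det = ∏ β : Idx k, l ^ (β.1.1 : ℕ) := by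
  rw [det_eq_prod_diag_of_blockTriangular_injective (blockTriangular_rescale h l) fun β γ hβγ => by
    obtain ⟨hfst, hsnd⟩ := Prod.ext_iff.1 (toLex.injective hβγ)
    exact Subtype.ext (Prod.ext (Fin.ext hfst) (Fin.ext hsnd))]
  exact Finset.prod_congr rfl fun β _ => by simp [rescale]

theorem abs_det_rescale (h : ℝ) {l : ℝ} (hl : 0 < l) :
    |(rescale k h l).det| = l ^ ((k : ℝ) * (k + 1) * (k + 2) / 6) := by
  rw [det_rescale, Finset.prod_pow_eq_pow_sum, abs_of_pos (by positivity), ← Idx.sum_fst,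
    ← rpow_natCast, Nat.cast_sum]

theorem measurable_mulVec_rescale (h l : ℝ) :
    Measurable fun x : Idx k → ℝ => (rescale k h l).mulVec x :=
  (LinearMap.continuous_of_finiteDimensional (Matrix.toLin' (rescale k h l))).measurable

theorem lintegral_mulVec_rescale (h : ℝ) {l : ℝ} (hl : 0 < l) {g : (Idx k → ℝ) → ℝ≥0∞}
    (hg : Measurable g) :
    ∫⁻ x, g ((rescale k h l).mulVec x)
      = ENNReal.ofReal (l ^ ((k : ℝ) * (k + 1) * (k + 2) / 6))⁻¹ * ∫⁻ x, g x := by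
  have hdet : (rescale k h l).det ≠ 0 := by
    rw [← abs_pos, abs_det_rescale h hl]; positivity
  rw [← abs_det_rescale (k := k) h hl, ← abs_inv, ← smul_eq_mul, ← lintegral_smul_measure,
    ← Real.map_matrix_volume_pi_eq_smul_volume_pi hdet]
  exact (lintegral_map hg (measurable_mulVec_rescale h l)).symm

theorem slice_add_mul (x : Idx k → ℝ) (h l s : ℝ) :
    slice k x (h + l * s)
      = 𝐞 (∑ β : Idx k, x β * if (β.1.2 : ℕ) = 0 then h ^ (β.1.1 : ℕ) else 0)
        • slice k ((rescale k h l).mulVec x) s := by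
  simp_rw [slice, Pphase_add_mul, AddChar.map_add_eq_mul, Circle.coe_mul,
    intervalIntegral.integral_const_mul, Circle.smul_def, smul_eq_mul]

theorem bandPart_Icc (a : ℝ) (x : Idx k → ℝ) {p q : ℝ} (hpq : p ≤ q) :
    bandPart k a (Icc p q) x = ∫ s in p..q, band a (slice k x s) := by
  rw [bandPart, integral_Icc_eq_integral_Ioc, intervalIntegral.integral_of_le hpq]

theorem norm_bandPart_Icc_add (a : ℝ) (x : Idx k → ℝ) (h : ℝ) {l : ℝ} (hl : 0 ≤ l) :
    ‖bandPart k a (Icc h (h + l)) x‖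
      = l * ‖bandPart k a (Icc 0 1) ((rescale k h l).mulVec x)‖ := by
  have hsubst := intervalIntegral.smul_integral_comp_add_mul (a := 0) (b := 1)
    (fun s => band a (slice k x s)) l h
  simp_rw [mul_zero, add_zero, mul_one, slice_add_mul, band_circle_smul, Circle.smul_def,
    intervalIntegral.integral_smul] at hsubst
  rw [bandPart_Icc a x (by linarith), bandPart_Icc a _ zero_le_one, ← hsubst, norm_smul, norm_smul,
    Circle.norm_coe, one_mul, Real.norm_of_nonneg hl]

theorem norm_slice_le (x : Idx k → ℝ) (s : ℝ) : ‖slice k x s‖ ≤ 1 := by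
  rw [slice_eq_smul_highSlice, Circle.norm_smul]
  exact norm_highSlice_le _ _

theorem continuous_slice (x : Idx k → ℝ) : Continuous (slice k x) := by
  simp_rw [funext (slice_eq_smul_highSlice x), Circle.smul_def]
  have hhigh : Continuous fun s => highSlice k (highPart x) s :=
    continuous_highSlice.comp (f := fun s => (highPart x, s)) (by fun_prop)
  have hchar : Continuous fun s : ℝ =>
      (𝐞 (∑ m : Fin k, lowPart x m * s ^ ((m : ℕ) + 1)) : ℂ) := by
    fun_prop
  exact hchar.smul hhigh

theorem measurable_bandPart (a : ℝ) (J : Set ℝ) : Measurable (bandPart k a J) := by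
  rw [funext (bandPart_eq_splitBandPart a J)]
  exact (measurable_splitBandPart a J).comp (f := fun x => (highPart x, lowPart x))
    measurePreserving_highPart_lowPart.measurable

theorem intervalIntegrable_band_slice {a : ℝ} (ha : 0 ≤ a) (x : Idx k → ℝ) (p q : ℝ) :
    IntervalIntegrable (fun s => band a (slice k x s)) volume p q := by
  refine (intervalIntegrable_const (c := a)).mono_fun
    ((measurable_band a).comp (continuous_slice x).measurable).aestronglyMeasurable
    (.of_forall fun s => ?_)
  rw [Real.norm_of_nonneg ha]
  exact norm_band_le ha _

theorem norm_bandPart_le {a : ℝ} (ha : 0 ≤ a) (x : Idx k → ℝ) :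
    ‖bandPart k a (Icc 0 1) x‖ ≤ a := by
  simpa [bandPart] using norm_setIntegral_le_of_norm_le_const (μ := volume) (s := Icc (0 : ℝ) 1)
    (f := fun s => band a (slice k x s)) (by simp) fun s _ => norm_band_le ha _

/-- The `j`-th of the `M` consecutive intervals of length `1 / M` which make up `[0, 1]`. -/
def cell (M j : ℕ) : Set ℝ := Icc ((j : ℝ) / M) ((j : ℝ) / M + (M : ℝ)⁻¹)

theorem cell_subset_Icc {M j : ℕ} (hj : j < M) : cell M j ⊆ Icc 0 1 := by
  refine Icc_subset_Icc (by positivity) ?_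
  rw [← one_div, ← add_div]
  exact div_le_one_of_le₀ (by exact_mod_cast hj) (by positivity)

theorem add_inv_le_of_mem_cell {M i j : ℕ} (hij : i + 2 ≤ j) {s s' : ℝ} (hs : s ∈ cell M i)
    (hs' : s' ∈ cell M j) : s + (M : ℝ)⁻¹ ≤ s' := by
  calc s + (M : ℝ)⁻¹ ≤ (i : ℝ) / M + (M : ℝ)⁻¹ + (M : ℝ)⁻¹ := by grw [hs.2]
    _ = (i + 2 : ℝ) / M := by ring
    _ ≤ (j : ℝ) / M := by gcongr; exact_mod_cast hij
    _ ≤ s' := hs'.1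

theorem bandPart_eq_sum_cell {a : ℝ} (ha : 0 ≤ a) (x : Idx k → ℝ) {M : ℕ} (hM : 0 < M) :
    bandPart k a (Icc 0 1) x = ∑ j : Fin M, bandPart k a (cell M j) x := by
  have hM₀ : (M : ℝ) ≠ 0 := by exact_mod_cast hM.ne'
  have hsum := intervalIntegral.sum_integral_adjacent_intervals (μ := volume)
    (f := fun s => band a (slice k x s)) (a := fun j : ℕ => (j : ℝ) / M) (n := M)
    fun j _ => intervalIntegrable_band_slice ha x _ _
  rw [Nat.cast_zero, zero_div, div_self hM₀, ← bandPart_Icc a x zero_le_one,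
    Finset.sum_range] at hsum
  rw [← hsum]
  refine Finset.sum_congr rfl fun j _ => ?_
  rw [cell, bandPart_Icc a x (le_add_of_nonneg_right (by positivity)), Nat.cast_succ, add_div,
    one_div]

theorem enorm_bandPart_cell (a : ℝ) (x : Idx k → ℝ) (M j : ℕ) :
    ‖bandPart k a (cell M j) x‖ₑ = ENNReal.ofReal (M : ℝ)⁻¹
      * ‖bandPart k a (Icc 0 1) ((rescale k ((j : ℝ) / M) (M : ℝ)⁻¹).mulVec x)‖ₑ := by
  rw [cell, ← ofReal_norm, norm_bandPart_Icc_add a x _ (by positivity),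
    ENNReal.ofReal_mul (by positivity), ofReal_norm]

end Rescaling

section BandEstimate

variable {k : ℕ}

theorem exists_nat_mul_rpow_neg_le (A : ℝ) {b : ℝ} (hb : 0 < b) :
    ∃ M : ℕ, 0 < M ∧ A * (M : ℝ) ^ (-b) ≤ 2⁻¹ := by
  have hlim : Filter.Tendsto (fun M : ℕ => A * (M : ℝ) ^ (-b)) Filter.atTop (nhds (A * 0)) :=
    ((tendsto_rpow_neg_atTop hb).comp tendsto_natCast_atTop_atTop).const_mul A
  rw [mul_zero] at hlim
  exact ((Filter.eventually_gt_atTop 0).and (hlim.eventually_le_const (by norm_num))).exists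

theorem exists_contracting_subdivision {A p Q : ℝ} (hA : 0 ≤ A) (hQ : 0 ≤ Q) (hp : Q + 1 < p) :
    ∃ M : ℕ, 0 < M ∧ ENNReal.ofReal (A * (M : ℝ)⁻¹) ^ p * M ≤ 2⁻¹ ∧
      ENNReal.ofReal (A * (M : ℝ)⁻¹) ^ p * (M * ENNReal.ofReal ((M : ℝ)⁻¹ ^ Q)⁻¹) ≤ 2⁻¹ := by
  obtain ⟨M, hM, hMA⟩ := exists_nat_mul_rpow_neg_le (A ^ p) (b := p - 1 - Q) (by linarith)
  have hM₀ : (0 : ℝ) < M := by exact_mod_cast hM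
  have hcontr :
      ENNReal.ofReal (A * (M : ℝ)⁻¹) ^ p * (M * ENNReal.ofReal ((M : ℝ)⁻¹ ^ Q)⁻¹) ≤ 2⁻¹ := by
    rw [ENNReal.ofReal_rpow_of_nonneg (by positivity) (by linarith), ← ENNReal.ofReal_natCast,
      ← ENNReal.ofReal_mul hM₀.le, ← ENNReal.ofReal_mul (by positivity),
      ← ENNReal.ofReal_ofNat, ← ENNReal.ofReal_inv_of_pos two_pos]
    refine ENNReal.ofReal_le_ofReal (hMA.trans_eq' ?_)
    rw [mul_rpow hA (by positivity), inv_rpow hM₀.le, inv_rpow hM₀.le, inv_inv, mul_assoc,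
      ← rpow_neg hM₀.le, show -(p - 1 - Q) = -p + (1 + Q) by ring, rpow_add hM₀, rpow_add hM₀,
      rpow_one]
  refine ⟨M, hM, hcontr.trans' ?_, hcontr⟩
  gcongr
  refine le_mul_of_one_le_right' (ENNReal.one_le_ofReal.2 ?_)
  rw [inv_rpow hM₀.le, inv_inv]
  exact one_le_rpow (by exact_mod_cast hM) hQ

/-- The broad part of the power `(k + 1) * u` of a band part: the products of its contributions
from `k + 1` separated cells. -/
def broadPart (k M : ℕ) (u a : ℝ) (x : Idx k → ℝ) : ℝ≥0∞ :=
  ∑ c ∈ spacedTuples (k + 1) M, ∏ i, ‖bandPart k a (cell M (c i)) x‖ₑ ^ u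

theorem measurable_prod_bandPart_cell (u a : ℝ) {M : ℕ} (c : Fin (k + 1) → Fin M) :
    Measurable fun x : Idx k → ℝ => ∏ i, ‖bandPart k a (cell M (c i)) x‖ₑ ^ u :=
  Finset.measurable_prod _ fun _ _ => (measurable_bandPart _ _).enorm.pow_const u

theorem measurable_broadPart (M : ℕ) (u a : ℝ) : Measurable (broadPart k M u a) :=
  Finset.measurable_sum _ fun c _ => measurable_prod_bandPart_cell u a c

theorem exists_lintegral_broadPart_le (hk : 1 ≤ k) {u δ : ℝ} (hu : 2 ≤ u) (hδ : 0 < δ)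
    (hδ1 : δ ≤ 1) {M : ℕ} (hM : 0 < M) :
    ∃ C, ∀ a, 0 < a → ∫⁻ x, broadPart k M u a x ≤ ENNReal.ofReal
      (C * a ^ ((k + 1) * u - ((k : ℝ) * (k + 1) * (k + 2) / 6 + 2) - (k - 1) * δ)) := by
  choose! C hC₀ hC using fun c (hc : c ∈ spacedTuples (k + 1) M) =>
    exists_lintegral_prod_bandPart_le hk hu hδ hδ1 (ρ := (M : ℝ)⁻¹) (by positivity)
      (J := fun i => cell M (c i)) (fun _ => measurableSet_Icc)
      (fun i => cell_subset_Icc (c i).2) fun i j hij s hs s' hs' =>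
        add_inv_le_of_mem_cell ((Finset.mem_filter.1 hc).2 i j hij) hs hs'
  refine ⟨∑ c ∈ spacedTuples (k + 1) M, C c, fun a ha => ?_⟩
  simp_rw [broadPart]
  rw [lintegral_finsetSum _ fun c _ => measurable_prod_bandPart_cell u a c, Finset.sum_mul,
    ENNReal.ofReal_sum_of_nonneg fun c hc => mul_nonneg (hC₀ c hc) (rpow_nonneg ha.le _)]
  exact Finset.sum_le_sum fun c hc => hC c hc a ha

theorem enorm_bandPart_rpow_le_transfer_add {u a : ℝ} (hu : 0 ≤ u) (ha : 0 ≤ a) {M : ℕ}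
    (hM : 0 < M) (x : Idx k → ℝ) :
    ‖bandPart k a (Icc 0 1) x‖ₑ ^ ((k + 1) * u)
      ≤ transfer (ENNReal.ofReal (2 * (2 * k + 1) * (M : ℝ)⁻¹) ^ ((k + 1) * u))
          (fun (j : Fin M) y => (rescale k ((j : ℝ) / M) (M : ℝ)⁻¹).mulVec y)
          (fun y => ‖bandPart k a (Icc 0 1) y‖ₑ ^ ((k + 1) * u)) x
        + ENNReal.ofReal (2 * M) ^ ((k + 1) * u) * broadPart k M u a x := by
  have hp : 0 ≤ ((k : ℝ) + 1) * u := by positivity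
  rw [bandPart_eq_sum_cell ha x hM]
  refine (enorm_sum_rpow_le k hM hu _).trans_eq ?_
  congr 1
  simp_rw [enorm_bandPart_cell, ENNReal.mul_rpow_of_nonneg _ _ hp]
  rw [transfer, ← Finset.mul_sum, ← mul_assoc,
    ENNReal.ofReal_mul (p := 2 * (2 * (k : ℝ) + 1)) (by positivity),
    ENNReal.mul_rpow_of_nonneg _ _ hp]

theorem lintegral_bandPart_le_broadPart {u a : ℝ} (hu : 0 ≤ u) (ha : 0 ≤ a) (ha1 : a ≤ 1) {M : ℕ}
    (hM : 0 < M) (hθ : ENNReal.ofReal (2 * (2 * k + 1) * (M : ℝ)⁻¹) ^ ((k + 1) * u) * M ≤ 2⁻¹)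
    (hθD : ENNReal.ofReal (2 * (2 * k + 1) * (M : ℝ)⁻¹) ^ ((k + 1) * u)
      * (M * ENNReal.ofReal ((M : ℝ)⁻¹ ^ ((k : ℝ) * (k + 1) * (k + 2) / 6))⁻¹) ≤ 2⁻¹) :
    ∫⁻ x : Idx k → ℝ, ‖bandPart k a (Icc 0 1) x‖ₑ ^ ((k + 1) * u)
      ≤ 2 * (ENNReal.ofReal (2 * M) ^ ((k + 1) * u) * ∫⁻ x, broadPart k M u a x) := by
  rw [← lintegral_const_mul _ (measurable_broadPart M u a)]
  refine lintegral_le_two_mul_of_le_transfer_add ((measurable_broadPart M u a).const_mul _)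
    (fun j => measurable_mulVec_rescale _ _)
    (fun j g hg => lintegral_mulVec_rescale _ (by positivity) hg) (fun x => ?_)
    (enorm_bandPart_rpow_le_transfer_add hu ha hM) (by rwa [Fintype.card_fin])
    (by rwa [Fintype.card_fin])
  refine ENNReal.rpow_le_one ?_ (by positivity)
  rw [← ofReal_norm]
  exact ENNReal.ofReal_le_one.2 ((norm_bandPart_le ha x).trans ha1)

theorem exists_lintegral_bandPart_le (hk : 1 ≤ k) {p δ : ℝ} (hp₂ : (k + 1) * 2 ≤ p)
    (hp : (k : ℝ) * (k + 1) * (k + 2) / 6 + 1 < p) (hδ : 0 < δ) (hδ1 : δ ≤ 1) :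
    ∃ C, ∀ a, 0 < a → a ≤ 1 → ∫⁻ x : Idx k → ℝ, ‖bandPart k a (Icc 0 1) x‖ₑ ^ p
      ≤ ENNReal.ofReal
        (C * a ^ (p - ((k : ℝ) * (k + 1) * (k + 2) / 6 + 2) - (k - 1) * δ)) := by
  obtain ⟨u, rfl⟩ : ∃ u, p = (k + 1) * u := ⟨p / (k + 1), by field_simp⟩
  have hu : 2 ≤ u := le_of_mul_le_mul_left hp₂ (by positivity)
  have hu₀ : 0 ≤ u := by linarith
  obtain ⟨M, hM, hθ, hθD⟩ :=
    exists_contracting_subdivision (A := 2 * (2 * k + 1)) (by positivity) (by positivity) hp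
  obtain ⟨C, hC⟩ := exists_lintegral_broadPart_le hk hu hδ hδ1 hM
  refine ⟨2 * ((2 * M) ^ ((k + 1) * u) * C), fun a ha ha1 => ?_⟩
  refine (lintegral_bandPart_le_broadPart hu₀ ha.le ha1 hM hθ hθD).trans ?_
  grw [hC a ha]
  rw [ENNReal.ofReal_rpow_of_nonneg (by positivity) (by positivity),
    ← ENNReal.ofReal_mul (by positivity), ← ENNReal.ofReal_ofNat 2,
    ← ENNReal.ofReal_mul zero_le_two, mul_assoc 2, mul_assoc _ C]

end BandEstimate

section Summation

variable {k : ℕ}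

theorem Eone_eq_setIntegral_slice (x : Idx k → ℝ) : Eone k x = ∫ s in Icc 0 1, slice k x s := by
  set f : ℝ × ℝ → ℂ := fun q => 𝐞 (Pphase k x ![q.1, q.2])
  have hf : Continuous f := by
    simp only [f, Pphase, Matrix.cons_val_zero, Matrix.cons_val_one]
    fun_prop
  have hexp (ξ : Fin 2 → ℝ) : Complex.exp (2 * Real.pi * Complex.I * Pphase k x ξ)
      = f (MeasurableEquiv.finTwoArrow ξ) := by
    have hξ : ![ξ 0, ξ 1] = ξ := by ext i; fin_cases i <;> rfl
    simp only [f, MeasurableEquiv.finTwoArrow_apply, hξ, Real.fourierChar_apply]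
    push_cast
    ring_nf
  have hsquare : Icc (0 : Fin 2 → ℝ) 1
      = MeasurableEquiv.finTwoArrow ⁻¹' (Icc (0 : ℝ) 1 ×ˢ Icc (0 : ℝ) 1) := by
    ext ξ
    simp only [mem_Icc, Pi.le_def, Fin.forall_fin_two, mem_preimage, mem_prod,
      MeasurableEquiv.finTwoArrow_apply, Pi.zero_apply, Pi.one_apply]
    tauto
  calc Eone k x = ∫ q in Icc (0 : ℝ) 1 ×ˢ Icc (0 : ℝ) 1, f q := by
        simp_rw [Eone, hexp, hsquare]
        exact (volume_preserving_finTwoArrow ℝ).setIntegral_preimage_emb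
          MeasurableEquiv.finTwoArrow.measurableEmbedding f _
    _ = ∫ s in Icc (0 : ℝ) 1, ∫ t in Icc (0 : ℝ) 1, f (s, t) := by
        rw [Measure.volume_eq_prod]
        exact setIntegral_prod _
          (hf.continuousOn.integrableOn_compact (isCompact_Icc.prod isCompact_Icc))
    _ = ∫ s in Icc 0 1, slice k x s := by
        simp_rw [slice, intervalIntegral.integral_of_le zero_le_one, integral_Icc_eq_integral_Ioc]
        rfl

theorem hasSum_band {z : ℂ} (hz : ‖z‖ ≤ 1) : HasSum (fun n : ℕ => band ((1 / 2) ^ n) z) z := by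
  rcases eq_or_ne z 0 with rfl | hz₀
  · simp [band]
  obtain ⟨n, hlt, hle⟩ := exists_nat_pow_near_of_lt_one (norm_pos_iff.2 hz₀) hz
    (by norm_num : (0 : ℝ) < 1 / 2) (by norm_num)
  have hanti {i j : ℕ} (hij : i ≤ j) : ((1 : ℝ) / 2) ^ j ≤ (1 / 2) ^ i :=
    pow_le_pow_of_le_one (by norm_num) (by norm_num) hij
  have hhalf (m : ℕ) : ((1 : ℝ) / 2) ^ m / 2 = (1 / 2) ^ (m + 1) := by ring
  have hband : band ((1 / 2) ^ n) z = z := if_pos ⟨by rwa [hhalf], hle⟩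
  nth_rw 2 [← hband]
  refine hasSum_single n fun m hm => if_neg ?_
  rintro ⟨hlt', hle'⟩
  rw [hhalf] at hlt'
  rcases lt_or_gt_of_ne hm with hmn | hnm
  · exact (hlt'.trans_le (hle.trans (hanti hmn))).false
  · exact (hlt.trans_le (hle'.trans (hanti hnm))).false

theorem hasSum_bandPart (x : Idx k → ℝ) :
    HasSum (fun n : ℕ => bandPart k ((1 / 2) ^ n) (Icc 0 1) x) (Eone k x) := by
  have hint (n : ℕ) : IntegrableOn (fun s => band ((1 / 2) ^ n) (slice k x s)) (Icc 0 1) := by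
    rw [integrableOn_Icc_iff_integrableOn_Ioc]
    exact (intervalIntegrable_band_slice (by positivity) x 0 1).1
  have hle (n : ℕ) : ∫ s in Icc (0 : ℝ) 1, ‖band ((1 / 2) ^ n) (slice k x s)‖ ≤ (1 / 2) ^ n := by
    calc _ ≤ ∫ _s in Icc (0 : ℝ) 1, ((1 : ℝ) / 2) ^ n :=
          integral_mono (hint n).norm (integrable_const _) fun s => norm_band_le (by positivity) _
      _ = (1 / 2) ^ n := by simp
  have hsum := hasSum_integral_of_summable_integral_norm hint
    (summable_geometric_two.of_nonneg_of_le (fun n => by positivity) hle)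
  simp_rw [(hasSum_band (norm_slice_le x _)).tsum_eq] at hsum
  rwa [Eone_eq_setIntegral_slice]

theorem tsum_rpow_le_weighted {ι : Type*} {p : ℝ} (hp : 0 < p) (e w : ι → ℝ≥0∞)
    (hw₀ : ∀ n, w n ≠ 0) (hw : ∀ n, w n ≠ ⊤) :
    (∑' n, e n) ^ p ≤ (∑' n, w n) ^ p * ∑' n, ((w n)⁻¹ * e n) ^ p := by
  set T := ∑' n, ((w n)⁻¹ * e n) ^ p
  have hterm (n : ι) : e n ≤ w n * T ^ p⁻¹ := by
    rw [mul_comm, ← ENNReal.div_le_iff_le_mul (.inl (hw₀ n)) (.inl (hw n)),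
      ENNReal.le_rpow_inv_iff hp, ENNReal.div_eq_inv_mul]
    exact ENNReal.le_tsum n
  calc (∑' n, e n) ^ p ≤ ((∑' n, w n) * T ^ p⁻¹) ^ p := by
        rw [← ENNReal.tsum_mul_right]
        exact ENNReal.rpow_le_rpow (ENNReal.tsum_le_tsum hterm) hp.le
    _ = (∑' n, w n) ^ p * T := by
        rw [ENNReal.mul_rpow_of_nonneg _ _ hp.le, ENNReal.rpow_inv_rpow hp.ne']

variable {X : Type*} [MeasurableSpace X] {μ : Measure X}

theorem lintegral_tsum_rpow_le_weighted {ι : Type*} [Countable ι] {p : ℝ} (hp : 0 < p)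
    {e : ι → X → ℝ≥0∞} (he : ∀ n, Measurable (e n)) (w : ι → ℝ≥0∞) (hw₀ : ∀ n, w n ≠ 0)
    (hw : ∑' n, w n ≠ ⊤) :
    ∫⁻ x, (∑' n, e n x) ^ p ∂μ ≤ (∑' n, w n) ^ p * ∑' n, (w n)⁻¹ ^ p * ∫⁻ x, e n x ^ p ∂μ := by
  calc ∫⁻ x, (∑' n, e n x) ^ p ∂μ
      ≤ ∫⁻ x, (∑' n, w n) ^ p * ∑' n, ((w n)⁻¹ * e n x) ^ p ∂μ := lintegral_mono fun x =>
        tsum_rpow_le_weighted hp _ w hw₀ (ENNReal.ne_top_of_tsum_ne_top hw)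
    _ = (∑' n, w n) ^ p * ∑' n, ∫⁻ x, ((w n)⁻¹ * e n x) ^ p ∂μ := by
        rw [lintegral_const_mul' _ _ (ENNReal.rpow_ne_top_of_nonneg hp.le hw),
          lintegral_tsum fun n => (((he n).const_mul _).pow_const p).aemeasurable]
    _ = _ := by
        simp_rw [ENNReal.mul_rpow_of_nonneg _ _ hp.le, lintegral_const_mul _ ((he _).pow_const p)]

theorem lintegral_tsum_rpow_lt_top {p η C : ℝ} (hp : 0 < p) (hη : 0 < η) {e : ℕ → X → ℝ≥0∞}
    (he : ∀ n, Measurable (e n))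
    (hle : ∀ n, ∫⁻ x, e n x ^ p ∂μ ≤ ENNReal.ofReal (C * ((1 / 2) ^ n) ^ η)) :
    ∫⁻ x, (∑' n, e n x) ^ p ∂μ < ⊤ := by
  have hhalf : (0 : ℝ) < 1 / 2 := by norm_num
  have hlt {b : ℝ} (hb : 0 < b) : ((1 : ℝ) / 2) ^ b < 1 := rpow_lt_one hhalf.le (by norm_num) hb
  -- The weights `r ^ n` use up half of the decay of the integrals, and leave `t ^ n`.
  set r : ℝ := (1 / 2) ^ (η / (2 * p))
  set t : ℝ := (1 / 2) ^ (η / 2)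
  have hr (n : ℕ) : 0 < r ^ n := by positivity
  have hrt (n : ℕ) : (r ^ n)⁻¹ ^ p * (C * ((1 / 2) ^ n) ^ η) = C * t ^ n := by
    have : (r ^ n)⁻¹ ^ p * ((1 / 2) ^ n) ^ η = t ^ n := by
      simp only [r, t, ← rpow_natCast, ← rpow_mul hhalf.le,
        ← rpow_neg hhalf.le, ← rpow_add hhalf]
      congr 1
      field_simp
      ring
    rw [← this]; ring
  have hterm (n : ℕ) :
      (ENNReal.ofReal (r ^ n))⁻¹ ^ p * ∫⁻ x, e n x ^ p ∂μ ≤ ENNReal.ofReal (C * t ^ n) := by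
    refine (mul_le_mul_right (hle n) _).trans_eq ?_
    rw [← ENNReal.ofReal_inv_of_pos (hr n), ENNReal.ofReal_rpow_of_nonneg (by positivity) hp.le,
      ← ENNReal.ofReal_mul (by positivity), hrt]
  have hweight : ∑' n, ENNReal.ofReal (r ^ n) ≠ ⊤ :=
    (summable_geometric_of_lt_one (by positivity) (hlt (by positivity))).tsum_ofReal_ne_top
  calc ∫⁻ x, (∑' n, e n x) ^ p ∂μ
      ≤ (∑' n, ENNReal.ofReal (r ^ n)) ^ p * ∑' n, ENNReal.ofReal (C * t ^ n) :=
        (lintegral_tsum_rpow_le_weighted hp he _ (fun n => (ENNReal.ofReal_pos.2 (hr n)).ne')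
          hweight).trans (mul_le_mul_right (ENNReal.tsum_le_tsum hterm) _)
    _ < ⊤ := ENNReal.mul_lt_top (ENNReal.rpow_lt_top_of_nonneg hp.le hweight)
        ((summable_geometric_of_lt_one (by positivity)
          (hlt (by positivity))).mul_left C).tsum_ofReal_lt_top

end Summation

/-- Upper bound part of Theorem 1.2: for every `k ≥ 2` and every real `p > q_k`,
where `q_k = k(k+1)(k+2)/6 + 2`, the integral `∫_{ℝ^N} |E_k1(x)|^p dx` is finite. -/
theorem tarry_upper_bound (k : ℕ) (hk : 2 ≤ k) :
    ∀ p : ℝ, (k : ℝ) * (k + 1) * (k + 2) / 6 + 2 < p →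
      (∫⁻ x : Idx k → ℝ, ENNReal.ofReal (‖Eone k x‖ ^ p)) < ⊤ := by
  intro p hp
  have hk₂ : (2 : ℝ) ≤ k := by exact_mod_cast hk
  have hp₀ : 0 < p := hp.trans' (by positivity)
  have hp₂ : ((k : ℝ) + 1) * 2 ≤ p := by
    nlinarith [mul_nonneg (sub_nonneg.2 hk₂) (sq_nonneg (k : ℝ))]
  set ε := p - ((k : ℝ) * (k + 1) * (k + 2) / 6 + 2)
  have hε : 0 < ε := sub_pos.2 hp
  have hδ : 0 < min 1 (ε / k) := lt_min one_pos (by positivity)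
  have hη : 0 < ε - (k - 1) * min 1 (ε / k) := by
    have : k * min 1 (ε / k) ≤ ε := by
      calc k * min 1 (ε / k) ≤ k * (ε / k) := by gcongr; exact min_le_right _ _
        _ = ε := by field_simp
    linarith
  obtain ⟨C, hC⟩ := exists_lintegral_bandPart_le (by omega) hp₂ (by linarith) hδ (min_le_left _ _)
  refine lt_of_le_of_lt (lintegral_mono fun x => ?_) (lintegral_tsum_rpow_lt_top hp₀ hη
    (fun n => (measurable_bandPart (k := k) ((1 / 2) ^ n) (Icc 0 1)).enorm) fun n =>
      hC _ (by positivity) (pow_le_one₀ (by norm_num) (by norm_num)))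
  rw [← ENNReal.ofReal_rpow_of_nonneg (norm_nonneg _) hp₀.le, ofReal_norm,
    ← (hasSum_bandPart x).tsum_eq]
  exact ENNReal.rpow_le_rpow enorm_tsum_le_tsum_enorm hp₀.le
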